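/- arXiv:1302.0084 — 2 statements merged into one kernel-verified Lean document; each statement's English description precedes it below -/
import Mathlib

section
/- Fix P > 0, ε ∈ (0, 1/2), α ∈ [1/2, 1), γ > 0, and let δ_{α,P} = (1−α)(√(1+P) − 1)². Then for any δ < δ_{α,P} there exists N₀ = N₀(α, P, δ, γ, ε) such that for all n ≥ N₀ the following holds: for every (n, M, ε, P) code for the AWGN channel whose size satisfies ln M ≥ n·(1/2)ln(1+P) − γ·n^α, and for every n×n real orthogonal matrix U, at least M/2 of the codewords x = f(i) satisfy ‖U x‖_∞ ≥ √(2 δ ln n). -/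
open MeasureTheory ProbabilityTheory

/-- The law of the noise vector `Z^n`: the `n`-fold product of standard Gaussians `N(0,1)`. -/
noncomputable def stdGaussianPi (n : ℕ) : Measure (Fin n → ℝ) :=
  Measure.pi fun _ => gaussianReal 0 1

/-!
Call a codeword `x` *low* if `‖x‖_∞ ≤ A = √(2 δ ln n)`. The capacity-achieving output law
`N(0, 1 + P)^n` has a fraction `ρ = ℙ(|N(0, 1 + P)| > t)` of its coordinates above the level
`t = s A`, whereas a low codeword plus noise almost never reaches `t`, since the noise would have to
exceed `(s - 1) A`. So tilt the output law by `exp (-#{j | t < |y j|})`: this makes a low codeword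
more distinguishable from it, because the normalising constant gains a factor `exp (n ρ / 2)` while
the count itself stays below `n ρ / 4`. Together with Chebyshev's inequality for the information
density, the change-of-measure converse then bounds the number of low codewords of a code with error
`ε` by `M (ε + o(1)) + exp (n C(P) - n ρ / 8)`. When `δ < (1 - α) (√(1 + P) - 1) ^ 2` some scale `s`
makes `ρ` dominate both the tail of the noise at `(s - 1) A` and `n ^ (α - 1)`; the latter makes the
last term negligible against `M`.

The law of the noise is rotation invariant, so rotating a code by `U` gives a code with the same
parameters, and it suffices to treat `U = 1`.
-/

open Filter Topology
open scoped ENNReal NNReal Matrix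

section ChangeOfMeasure

lemma lintegral_pi_prod {ι : Type*} [Fintype ι] {Ω : ι → Type*} [∀ i, MeasurableSpace (Ω i)]
    {μ : ∀ i, Measure (Ω i)} [∀ i, IsProbabilityMeasure (μ i)] {f : ∀ i, Ω i → ℝ≥0∞}
    (hf : ∀ i, Measurable (f i)) :
    ∫⁻ ω, ∏ i, f i (ω i) ∂Measure.pi μ = ∏ i, ∫⁻ x, f i x ∂μ i := by
  rw [lintegral_prod_eq_prod_lintegral_of_indepFun Finset.univ
    (fun i (ω : ∀ i, Ω i) ↦ f i (ω i)) (iIndepFun_pi fun i ↦ (hf i).aemeasurable)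
    fun i ↦ (hf i).comp (measurable_pi_apply i)]
  exact Finset.prod_congr rfl fun i _ ↦ (measurePreserving_eval μ i).lintegral_comp (hf i)

lemma pi_eq_withDensity_prod {ι : Type*} [Fintype ι] {Ω : ι → Type*}
    [∀ i, MeasurableSpace (Ω i)] {μ ν : ∀ i, Measure (Ω i)} [∀ i, IsProbabilityMeasure (μ i)]
    [∀ i, SigmaFinite (ν i)] {f : ∀ i, Ω i → ℝ≥0∞} (hf : ∀ i, Measurable (f i))
    (hν : ∀ i, ν i = (μ i).withDensity (f i)) :
    Measure.pi ν = (Measure.pi μ).withDensity fun ω ↦ ∏ i, f i (ω i) := by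
  classical
  refine Measure.pi_eq fun s hs ↦ ?_
  have indicator_prod (ω : ∀ i, Ω i) : (Set.univ.pi s).indicator (fun ω ↦ ∏ i, f i (ω i)) ω =
      ∏ i, (s i).indicator (f i) (ω i) := by
    by_cases hω : ω ∈ Set.univ.pi s
    · rw [Set.indicator_of_mem hω]
      exact Finset.prod_congr rfl fun i _ ↦ (Set.indicator_of_mem (hω i (Set.mem_univ i)) _).symm
    · obtain ⟨i, hi⟩ : ∃ i, ω i ∉ s i := by simpa using hω
      rw [Set.indicator_of_notMem hω]
      exact (Finset.prod_eq_zero (Finset.mem_univ i) (Set.indicator_of_notMem hi _)).symm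
  rw [withDensity_apply _ (.univ_pi hs), ← lintegral_indicator (.univ_pi hs)]
  simp_rw [indicator_prod, lintegral_pi_prod fun i ↦ (hf i).indicator (hs i),
    lintegral_indicator (hs _), hν, withDensity_apply _ (hs _)]

variable {Ω : Type*} [MeasurableSpace Ω]

lemma withDensity_exp_eq_tilted_withDensity {ν : Measure Ω} [NeZero ν] {f X : Ω → ℝ} {t : ℝ}
    (hf : Measurable f) (hX : Measurable X) (hexp : Integrable (fun ω ↦ Real.exp (t * X ω)) ν) :
    ν.withDensity (fun ω ↦ ENNReal.ofReal (Real.exp (f ω))) =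
      (ν.tilted fun ω ↦ t * X ω).withDensity
        fun ω ↦ ENNReal.ofReal (Real.exp (f ω - t * X ω + cgf X ν t)) := by
  rw [Measure.tilted, ← withDensity_mul _ (by fun_prop) (by fun_prop)]
  congr 1 with ω
  have hmgf : 0 < mgf X ν t := mgf_pos_iff.2 hexp
  rw [Pi.mul_apply, ← ENNReal.ofReal_mul (by positivity), ← mgf, Real.exp_add, Real.exp_sub, cgf,
    Real.exp_log hmgf]
  congr 1
  field_simp

lemma withDensity_exp_apply_le {Q : Measure Ω} {L : Ω → ℝ} (hL : Measurable L) (τ : ℝ)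
    {s : Set Ω} (hs : MeasurableSet s) :
    Q.withDensity (fun ω ↦ ENNReal.ofReal (Real.exp (L ω))) s ≤
      Q.withDensity (fun ω ↦ ENNReal.ofReal (Real.exp (L ω))) {ω | τ < L ω} +
        ENNReal.ofReal (Real.exp τ) * Q s := by
  set μ := Q.withDensity fun ω ↦ ENNReal.ofReal (Real.exp (L ω))
  have hdiff : MeasurableSet (s \ {ω | τ < L ω}) := hs.diff (measurableSet_lt (by fun_prop) hL)
  have hsmall : μ (s \ {ω | τ < L ω}) ≤ ENNReal.ofReal (Real.exp τ) * Q s := by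
    calc μ (s \ {ω | τ < L ω})
        = ∫⁻ ω in s \ {ω | τ < L ω}, ENNReal.ofReal (Real.exp (L ω)) ∂Q :=
          withDensity_apply _ hdiff
      _ ≤ ∫⁻ _ in s \ {ω | τ < L ω}, ENNReal.ofReal (Real.exp τ) ∂Q :=
          setLIntegral_mono' hdiff fun ω hω ↦ by gcongr; exact not_lt.1 hω.2
      _ = ENNReal.ofReal (Real.exp τ) * Q (s \ {ω | τ < L ω}) := setLIntegral_const _ _
      _ ≤ ENNReal.ofReal (Real.exp τ) * Q s := by gcongr; exact Set.sdiff_subset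
  calc μ s ≤ μ {ω | τ < L ω} + μ (s \ {ω | τ < L ω}) := by
        rw [add_comm]
        exact (measure_le_inter_add_sdiff μ s {ω | τ < L ω}).trans
          (by rw [add_comm]; gcongr; exact Set.inter_subset_right)
    _ ≤ μ {ω | τ < L ω} + ENNReal.ofReal (Real.exp τ) * Q s := by gcongr

lemma sum_measureReal_preimage_singleton_le {W : Type*} [MeasurableSpace W]
    [MeasurableSingletonClass W] {Q : Measure Ω} [IsProbabilityMeasure Q] {μ : W → Measure Ω}
    [∀ i, IsFiniteMeasure (μ i)] {L : W → Ω → ℝ} (hL : ∀ i, Measurable (L i))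
    (hμ : ∀ i, μ i = Q.withDensity fun ω ↦ ENNReal.ofReal (Real.exp (L i ω)))
    {g : Ω → W} (hg : Measurable g) (s : Finset W) (τ : ℝ) :
    ∑ i ∈ s, (μ i).real (g ⁻¹' {i}) ≤
      ∑ i ∈ s, (μ i).real {ω | τ < L i ω} + Real.exp τ := by
  have hmeas (i : W) : MeasurableSet (g ⁻¹' {i}) := hg (measurableSet_singleton i)
  have hle (i : W) : (μ i).real (g ⁻¹' {i}) ≤
      (μ i).real {ω | τ < L i ω} + Real.exp τ * Q.real (g ⁻¹' {i}) := by
    have h := withDensity_exp_apply_le (Q := Q) (hL i) τ (hmeas i)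
    rw [← hμ] at h
    have h' := ENNReal.toReal_mono (by finiteness) h
    rwa [ENNReal.toReal_add (by finiteness) (by finiteness), ENNReal.toReal_mul,
      ENNReal.toReal_ofReal (Real.exp_nonneg τ)] at h'
  have hQ : ∑ i ∈ s, Q.real (g ⁻¹' {i}) ≤ 1 := by
    rw [← measureReal_biUnion_finset (fun i _ j _ hij ↦ Disjoint.preimage g (by simpa using hij))
      fun i _ ↦ hmeas i]
    exact measureReal_le_one
  calc ∑ i ∈ s, (μ i).real (g ⁻¹' {i})
      ≤ ∑ i ∈ s, ((μ i).real {ω | τ < L i ω} + Real.exp τ * Q.real (g ⁻¹' {i})) :=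
        Finset.sum_le_sum fun i _ ↦ hle i
    _ = ∑ i ∈ s, (μ i).real {ω | τ < L i ω} + Real.exp τ * ∑ i ∈ s, Q.real (g ⁻¹' {i}) := by
        rw [Finset.sum_add_distrib, Finset.mul_sum]
    _ ≤ ∑ i ∈ s, (μ i).real {ω | τ < L i ω} + Real.exp τ := by
        gcongr
        exact mul_le_of_le_one_right (Real.exp_nonneg τ) hQ

end ChangeOfMeasure

section GaussianMoments

variable {m : ℝ} {v : ℝ≥0}

lemma hasDerivAt_gaussianPDFReal (m : ℝ) (v : ℝ≥0) (x : ℝ) :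
    HasDerivAt (gaussianPDFReal m v) (-((x - m) / v) * gaussianPDFReal m v x) x := by
  rw [gaussianPDFReal_def]
  have hexponent : HasDerivAt (fun y ↦ -(y - m) ^ 2 / (2 * v)) (-((x - m) / v)) x := by
    refine ((((hasDerivAt_id x).sub_const m).fun_pow 2).fun_neg.div_const _).congr_deriv ?_
    simp only [id_eq]
    field_simp
    ring
  refine (hexponent.exp.const_mul _).congr_deriv ?_
  ring

lemma integrable_sub_pow_gaussianReal (k : ℕ) :
    Integrable (fun x ↦ (x - m) ^ k) (gaussianReal m v) := by
  have h : MemLp (fun x ↦ x - m) k (gaussianReal m v) :=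
    (memLp_id_gaussianReal k).sub (memLp_const m)
  exact h.integrable_norm_pow'.mono' (by fun_prop) (ae_of_all _ fun x ↦ by simp)

lemma integral_sub_pow_add_two_gaussianReal (k : ℕ) :
    ∫ x, (x - m) ^ (k + 2) ∂gaussianReal m v =
      (k + 1) * v * ∫ x, (x - m) ^ k ∂gaussianReal m v := by
  rcases eq_or_ne v 0 with rfl | hv
  · simp
  have hv' : (v : ℝ) ≠ 0 := by exact_mod_cast hv
  have integrable_mul_pdf (j : ℕ) : Integrable fun x ↦ (x - m) ^ j * gaussianPDFReal m v x := by
    have h := integrable_sub_pow_gaussianReal (m := m) (v := v) j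
    rw [gaussianReal_of_var_ne_zero _ hv, integrable_withDensity_iff (measurable_gaussianPDF _ _)
      (ae_of_all _ fun _ ↦ gaussianPDF_lt_top)] at h
    simpa only [toReal_gaussianPDF] using h
  have hparts := integral_mul_deriv_eq_deriv_mul_of_integrable
    (u := fun x ↦ (x - m) ^ (k + 1)) (u' := fun x ↦ (k + 1) * (x - m) ^ k)
    (v := gaussianPDFReal m v)
    (fun x _ ↦ by simpa using ((hasDerivAt_id x).sub_const m).fun_pow (k + 1))
    (fun x _ ↦ hasDerivAt_gaussianPDFReal m v x)
    (((integrable_mul_pdf (k + 2)).const_mul (-(v : ℝ)⁻¹)).congr (ae_of_all _ fun x ↦ by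
      simp only [Pi.mul_apply]; ring))
    (((integrable_mul_pdf k).const_mul (k + 1 : ℝ)).congr (ae_of_all _ fun x ↦ by
      simp only [Pi.mul_apply]; ring))
    (integrable_mul_pdf (k + 1))
  rw [integral_gaussianReal_eq_integral_smul hv, integral_gaussianReal_eq_integral_smul hv]
  calc ∫ x, gaussianPDFReal m v x • (x - m) ^ (k + 2)
      = ∫ x, -(v : ℝ) * ((x - m) ^ (k + 1) * (-((x - m) / v) * gaussianPDFReal m v x)) := by
        congr 1 with x
        rw [smul_eq_mul]
        field_simp
        ring
    _ = v * ∫ x, (k + 1) * (x - m) ^ k * gaussianPDFReal m v x := by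
        rw [integral_const_mul, hparts]
        ring
    _ = (k + 1) * v * ∫ x, gaussianPDFReal m v x • (x - m) ^ k := by
        simp_rw [smul_eq_mul, mul_assoc, integral_const_mul, mul_comm (gaussianPDFReal m v _)]
        ring

lemma integral_quartic_gaussianReal (a b c d e : ℝ) :
    ∫ x, (a + b * (x - m) + c * (x - m) ^ 2 + d * (x - m) ^ 3 + e * (x - m) ^ 4)
      ∂gaussianReal m v = a + c * v + e * (3 * v ^ 2) := by
  have moment_one : ∫ x, (x - m) ∂gaussianReal m v = 0 := by
    have hid : Integrable (fun x : ℝ ↦ x) (gaussianReal m v) :=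
      (memLp_id_gaussianReal 1).integrable le_rfl
    simp [integral_sub hid (integrable_const m)]
  have moment_two : ∫ x, (x - m) ^ 2 ∂gaussianReal m v = v := by
    simpa using integral_sub_pow_add_two_gaussianReal (m := m) (v := v) 0
  have moment_three : ∫ x, (x - m) ^ 3 ∂gaussianReal m v = 0 := by
    simpa [moment_one] using integral_sub_pow_add_two_gaussianReal (m := m) (v := v) 1
  have moment_four : ∫ x, (x - m) ^ 4 ∂gaussianReal m v = 3 * v ^ 2 := by
    rw [integral_sub_pow_add_two_gaussianReal 2, moment_two]
    push_cast
    ring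
  have integral_sum := integral_finsetSum (μ := gaussianReal m v) Finset.univ
    (f := fun (k : Fin 5) x ↦ ![a, b, c, d, e] k * (x - m) ^ (k : ℕ))
    fun k _ ↦ (integrable_sub_pow_gaussianReal k).const_mul _
  simpa [Fin.sum_univ_five, integral_const_mul, moment_one, moment_two, moment_three,
    moment_four] using integral_sum

lemma memLp_quadratic_gaussianReal (a b c : ℝ) :
    MemLp (fun x ↦ a + b * (x - m) + c * (x - m) ^ 2) 2 (gaussianReal m v) := by
  have memLp_pow (k : ℕ) : MemLp (fun x ↦ (x - m) ^ k) 2 (gaussianReal m v) :=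
    (memLp_two_iff_integrable_sq (by fun_prop)).2 <| by
      simpa only [← pow_mul] using integrable_sub_pow_gaussianReal (k * 2)
  have memLp_linear : MemLp (fun x ↦ b * (x - m)) 2 (gaussianReal m v) := by
    simpa using (memLp_pow 1).const_mul b
  exact ((memLp_const a).add memLp_linear).add ((memLp_pow 2).const_mul c)

lemma variance_quadratic_gaussianReal (a b c : ℝ) :
    Var[fun x ↦ a + b * (x - m) + c * (x - m) ^ 2; gaussianReal m v] =
      b ^ 2 * v + 2 * c ^ 2 * v ^ 2 := by
  have hsq (x : ℝ) : (a + b * (x - m) + c * (x - m) ^ 2) ^ 2 =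
      a ^ 2 + 2 * a * b * (x - m) + (b ^ 2 + 2 * a * c) * (x - m) ^ 2 +
        2 * b * c * (x - m) ^ 3 + c ^ 2 * (x - m) ^ 4 := by ring
  have hmean := integral_quartic_gaussianReal (m := m) (v := v) a b c 0 0
  simp only [zero_mul, add_zero] at hmean
  rw [variance_eq_sub (memLp_quadratic_gaussianReal a b c), hmean]
  simp only [Pi.pow_apply, hsq, integral_quartic_gaussianReal]
  ring

end GaussianMoments

section InformationDensity

/-- The information density `i(x; y)` of the channel `y ∼ N(x, 1)` against the output law
`N(0, v)`, i.e. the log-likelihood ratio of `N(x, 1)` to `N(0, v)`. The capacity-achieving output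
law at power `P` has `v = 1 + P`. -/
noncomputable def infoDensity (v : ℝ≥0) (x y : ℝ) : ℝ :=
  Real.log v / 2 + y ^ 2 / (2 * v) - (y - x) ^ 2 / 2

variable {v : ℝ≥0}

@[fun_prop]
lemma measurable_infoDensity (v : ℝ≥0) (x : ℝ) : Measurable (infoDensity v x) := by
  unfold infoDensity
  fun_prop

lemma gaussianPDFReal_mul_exp_infoDensity (hv : v ≠ 0) (x y : ℝ) :
    gaussianPDFReal 0 v y * Real.exp (infoDensity v x y) = gaussianPDFReal x 1 y := by
  have hv' : (0 : ℝ) < v := by positivity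
  have hsplit : infoDensity v x y =
      Real.log v / 2 + (-(y - x) ^ 2 / 2 - -y ^ 2 / (2 * v)) := by
    rw [infoDensity]
    ring
  simp only [gaussianPDFReal, hsplit, Real.exp_add, Real.exp_sub, Real.exp_half,
    Real.exp_log hv', sub_zero, NNReal.coe_one, mul_one, Real.sqrt_mul' _ hv'.le]
  field_simp

lemma gaussianReal_one_eq_withDensity (hv : v ≠ 0) (x : ℝ) :
    gaussianReal x 1 =
      (gaussianReal 0 v).withDensity fun y ↦ ENNReal.ofReal (Real.exp (infoDensity v x y)) := by
  rw [gaussianReal_of_var_ne_zero _ hv, gaussianReal_of_var_ne_zero _ one_ne_zero,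
    ← withDensity_mul _ (by fun_prop) (by fun_prop)]
  congr 1 with y
  rw [Pi.mul_apply, gaussianPDF, gaussianPDF, ← ENNReal.ofReal_mul (gaussianPDFReal_nonneg _ _ _),
    gaussianPDFReal_mul_exp_infoDensity hv]

lemma infoDensity_eq_quadratic (hv : v ≠ 0) (x : ℝ) :
    infoDensity v x = fun y ↦ Real.log v / 2 + x ^ 2 / (2 * v) + x / v * (y - x) +
      (1 - v) / (2 * v) * (y - x) ^ 2 := by
  funext y
  rw [infoDensity]
  field_simp
  ring

lemma memLp_infoDensity (hv : v ≠ 0) (x : ℝ) :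
    MemLp (infoDensity v x) 2 (gaussianReal x 1) := by
  rw [infoDensity_eq_quadratic hv]
  exact memLp_quadratic_gaussianReal _ _ _

lemma integral_infoDensity (hv : v ≠ 0) (x : ℝ) :
    ∫ y, infoDensity v x y ∂gaussianReal x 1 = Real.log v / 2 + (x ^ 2 - (v - 1)) / (2 * v) := by
  have h := integral_quartic_gaussianReal (m := x) (v := 1) (Real.log v / 2 + x ^ 2 / (2 * v))
    (x / v) ((1 - v) / (2 * v)) 0 0
  simp only [zero_mul, add_zero, NNReal.coe_one, mul_one] at h
  rw [infoDensity_eq_quadratic hv, h]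
  ring

lemma variance_infoDensity (hv : v ≠ 0) (x : ℝ) :
    Var[infoDensity v x; gaussianReal x 1] = (x ^ 2 + (v - 1) ^ 2 / 2) / v ^ 2 := by
  rw [infoDensity_eq_quadratic hv, variance_quadratic_gaussianReal]
  simp only [NNReal.coe_one]
  field_simp
  ring

variable {ι : Type*} [Fintype ι]

/-- The output law of the Gaussian channel on input `x`: independent coordinates
`y j ∼ N(x j, 1)`. -/
noncomputable def awgnOutput (x : ι → ℝ) : Measure (ι → ℝ) :=
  Measure.pi fun j ↦ gaussianReal (x j) 1

instance (x : ι → ℝ) : IsProbabilityMeasure (awgnOutput x) := by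
  unfold awgnOutput
  infer_instance

lemma awgnOutput_eq_withDensity (hv : v ≠ 0) (x : ι → ℝ) :
    awgnOutput x = (Measure.pi fun _ ↦ gaussianReal 0 v).withDensity
      fun y ↦ ENNReal.ofReal (Real.exp (∑ j, infoDensity v (x j) (y j))) := by
  rw [awgnOutput, pi_eq_withDensity_prod (fun j ↦ by fun_prop)
    fun j ↦ gaussianReal_one_eq_withDensity hv (x j)]
  congr 1 with y
  rw [Real.exp_sum, ENNReal.ofReal_prod_of_nonneg fun _ _ ↦ Real.exp_nonneg _]

lemma integral_sum_infoDensity_le (hv : v ≠ 0) {x : ι → ℝ}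
    (hx : ∑ j, x j ^ 2 ≤ Fintype.card ι * (v - 1 : ℝ)) :
    ∫ y, ∑ j, infoDensity v (x j) (y j) ∂awgnOutput x ≤ Fintype.card ι * (Real.log v / 2) := by
  have hint (j : ι) : Integrable (fun y : ι → ℝ ↦ infoDensity v (x j) (y j)) (awgnOutput x) :=
    integrable_comp_eval ((memLp_infoDensity hv (x j)).integrable one_le_two)
  calc ∫ y, ∑ j, infoDensity v (x j) (y j) ∂awgnOutput x
      = ∑ j, ∫ y, infoDensity v (x j) y ∂gaussianReal (x j) 1 := by
        rw [integral_finsetSum _ fun j _ ↦ hint j]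
        exact Finset.sum_congr rfl fun j _ ↦ integral_comp_eval (by fun_prop)
    _ = Fintype.card ι * (Real.log v / 2) +
          (∑ j, x j ^ 2 - Fintype.card ι * (v - 1)) / (2 * v) := by
        simp only [integral_infoDensity hv, Finset.sum_add_distrib, ← Finset.sum_div,
          Finset.sum_sub_distrib, Finset.sum_const, Finset.card_univ, nsmul_eq_mul]
        ring
    _ ≤ Fintype.card ι * (Real.log v / 2) :=
        add_le_of_nonpos_right (div_nonpos_of_nonpos_of_nonneg (by linarith) (by positivity))

lemma variance_sum_infoDensity_le (hv : v ≠ 0) {x : ι → ℝ}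
    (hx : ∑ j, x j ^ 2 ≤ Fintype.card ι * (v - 1 : ℝ)) :
    Var[fun y ↦ ∑ j, infoDensity v (x j) (y j); awgnOutput x] ≤ Fintype.card ι / 2 := by
  calc Var[fun y ↦ ∑ j, infoDensity v (x j) (y j); awgnOutput x]
      = ∑ j, (x j ^ 2 + (v - 1) ^ 2 / 2) / v ^ 2 := by
        have h := variance_sum_pi fun j ↦ memLp_infoDensity hv (x j)
        simp only [variance_infoDensity hv] at h
        rw [← h, awgnOutput]
        congr 1 with y
        simp
    _ = (∑ j, x j ^ 2 + Fintype.card ι * ((v - 1) ^ 2 / 2)) / v ^ 2 := by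
        rw [← Finset.sum_div, Finset.sum_add_distrib, Finset.sum_const, Finset.card_univ,
          nsmul_eq_mul]
    _ ≤ Fintype.card ι / 2 := by
        rw [div_le_iff₀ (by positivity)]
        nlinarith [Nat.cast_nonneg (α := ℝ) (Fintype.card ι)]

lemma measureReal_add_le_sum_infoDensity_le (hv : v ≠ 0) {x : ι → ℝ}
    (hx : ∑ j, x j ^ 2 ≤ Fintype.card ι * (v - 1 : ℝ)) {a : ℝ} (ha : 0 < a) :
    (awgnOutput x).real
        {y | Fintype.card ι * (Real.log v / 2) + a ≤ ∑ j, infoDensity v (x j) (y j)} ≤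
      Fintype.card ι / 2 / a ^ 2 := by
  have hLp : MemLp (fun y ↦ ∑ j, infoDensity v (x j) (y j)) 2 (awgnOutput x) :=
    memLp_finsetSum _ fun j _ ↦
      (memLp_infoDensity hv (x j)).comp_measurePreserving (measurePreserving_eval _ j)
  have hmean := integral_sum_infoDensity_le hv hx
  refine ENNReal.toReal_le_of_le_ofReal (by positivity) ?_
  calc awgnOutput x {y | Fintype.card ι * (Real.log v / 2) + a ≤ ∑ j, infoDensity v (x j) (y j)}
      ≤ awgnOutput x {y | a ≤ |∑ j, infoDensity v (x j) (y j) -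
          ∫ y, ∑ j, infoDensity v (x j) (y j) ∂awgnOutput x|} :=
        measure_mono fun y hy ↦ by
          rw [Set.mem_ofPred_eq] at hy ⊢
          exact (le_sub_iff_add_le'.2 ((add_le_add_left hmean a).trans hy)).trans (le_abs_self _)
    _ ≤ ENNReal.ofReal (Var[fun y ↦ ∑ j, infoDensity v (x j) (y j); awgnOutput x] / a ^ 2) :=
        meas_ge_le_variance_div_sq hLp ha
    _ ≤ ENNReal.ofReal (Fintype.card ι / 2 / a ^ 2) := by
        gcongr
        exact variance_sum_infoDensity_le hv hx

end InformationDensity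

section Tails

lemma mgf_indicator_neg_one_le {Ω : Type*} [MeasurableSpace Ω] {μ : Measure Ω}
    [IsProbabilityMeasure μ] {B : Set Ω} (hB : MeasurableSet B) :
    mgf (B.indicator 1) μ (-1) ≤ 1 - μ.real B / 2 := by
  have hint : Integrable (B.indicator (1 : Ω → ℝ)) μ := (integrable_const 1).indicator hB
  have hexp (ω : Ω) : Real.exp (-1 * B.indicator 1 ω) ≤ 1 - B.indicator 1 ω / 2 := by
    by_cases hω : ω ∈ B
    · have := Real.exp_neg_one_lt_half
      simp only [Set.indicator_of_mem hω, Pi.one_apply, mul_one]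
      linarith
    · simp [hω]
  calc mgf (B.indicator 1) μ (-1)
      ≤ ∫ ω, (1 - B.indicator 1 ω / 2) ∂μ :=
        integral_mono_of_nonneg (ae_of_all _ fun _ ↦ Real.exp_nonneg _)
          ((integrable_const 1).sub (hint.div_const 2)) (ae_of_all _ hexp)
    _ = 1 - μ.real B / 2 := by
        rw [integral_sub (integrable_const 1) (hint.div_const 2), integral_div,
          integral_indicator_one hB]
        simp

lemma integrable_exp_neg_one_mul_of_nonneg {Ω : Type*} [MeasurableSpace Ω] {μ : Measure Ω}
    [IsFiniteMeasure μ] {X : Ω → ℝ} (hX : Measurable X) (hX₀ : ∀ ω, 0 ≤ X ω) :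
    Integrable (fun ω ↦ Real.exp (-1 * X ω)) μ :=
  (integrable_const (1 : ℝ)).mono' (by fun_prop) <| ae_of_all _ fun ω ↦ by
    simpa using hX₀ ω

lemma cgf_indicator_neg_one_le {Ω : Type*} [MeasurableSpace Ω] {μ : Measure Ω}
    [IsProbabilityMeasure μ] {B : Set Ω} (hB : MeasurableSet B) :
    cgf (B.indicator 1) μ (-1) ≤ -(μ.real B / 2) := by
  have hpos : 0 < mgf (B.indicator 1) μ (-1) :=
    mgf_pos <| integrable_exp_neg_one_mul_of_nonneg (measurable_one.indicator hB)
      fun _ ↦ Set.indicator_nonneg (fun _ _ ↦ zero_le_one) _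
  calc cgf (B.indicator 1) μ (-1) ≤ mgf (B.indicator 1) μ (-1) - 1 :=
        Real.log_le_sub_one_of_pos hpos
    _ ≤ -(μ.real B / 2) := by linarith [mgf_indicator_neg_one_le (μ := μ) hB]

variable {ι : Type*} [Fintype ι]

/-- The number of coordinates of `y` whose absolute value exceeds the level `t`, as a real
number. -/
noncomputable def exceedanceCount (t : ℝ) (y : ι → ℝ) : ℝ :=
  ∑ j, {u : ℝ | t < |u|}.indicator 1 (y j)

lemma measurableSet_lt_abs (t : ℝ) : MeasurableSet {u : ℝ | t < |u|} :=
  measurableSet_lt measurable_const measurable_norm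

@[fun_prop]
lemma measurable_exceedanceCount (t : ℝ) : Measurable (exceedanceCount (ι := ι) t) :=
  Finset.measurable_sum _ fun j _ ↦
    (measurable_one.indicator (measurableSet_lt_abs t)).comp (measurable_pi_apply j)

lemma exceedanceCount_nonneg (t : ℝ) (y : ι → ℝ) : 0 ≤ exceedanceCount t y :=
  Finset.sum_nonneg fun _ _ ↦ Set.indicator_nonneg (fun _ _ ↦ zero_le_one) _

lemma cgf_exceedanceCount_neg_one_le (ν : Measure ℝ) [IsProbabilityMeasure ν] (t : ℝ) :
    cgf (exceedanceCount t) (Measure.pi fun _ : ι ↦ ν) (-1) ≤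
      -(Fintype.card ι * ν.real {u | t < |u|} / 2) := by
  have hmeas := (measurable_one (α := ℝ) (β := ℝ)).indicator (measurableSet_lt_abs t)
  have hsum : exceedanceCount t =
      ∑ j : ι, fun y : ι → ℝ ↦ {u : ℝ | t < |u|}.indicator (1 : ℝ → ℝ) (y j) := by
    ext y
    simp [exceedanceCount]
  have heval (j : ι) : cgf (fun y : ι → ℝ ↦ {u : ℝ | t < |u|}.indicator (1 : ℝ → ℝ) (y j))
      (Measure.pi fun _ ↦ ν) (-1) = cgf ({u : ℝ | t < |u|}.indicator 1) ν (-1) :=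
    congrArg Real.log <| integral_comp_eval (μ := fun _ : ι ↦ ν)
      (f := fun u ↦ Real.exp (-1 * {u : ℝ | t < |u|}.indicator 1 u)) (by fun_prop)
  rw [hsum, iIndepFun.cgf_sum (iIndepFun_pi fun _ ↦ hmeas.aemeasurable) (by fun_prop) fun j _ ↦
    integrable_exp_neg_one_mul_of_nonneg (by fun_prop)
      fun _ ↦ Set.indicator_nonneg (fun _ _ ↦ zero_le_one) _]
  simp only [heval, Finset.sum_const, Finset.card_univ, nsmul_eq_mul]
  rw [mul_div_assoc, ← mul_neg]
  gcongr
  exact cgf_indicator_neg_one_le (measurableSet_lt_abs t)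

lemma measureReal_le_exceedanceCount_le {μ : ι → Measure ℝ} [∀ j, IsProbabilityMeasure (μ j)]
    {t b c : ℝ} (hb : ∀ j, (μ j).real {u | t < |u|} ≤ b) (hc : 0 < c) :
    (Measure.pi μ).real {y | c ≤ exceedanceCount t y} ≤ Fintype.card ι * b / c := by
  have hint (j : ι) : Integrable ({u : ℝ | t < |u|}.indicator (1 : ℝ → ℝ)) (μ j) :=
    (integrable_const 1).indicator (measurableSet_lt_abs t)
  have hint_eval (j : ι) := integrable_comp_eval (μ := μ) (hint j)
  have hmean : ∫ y, exceedanceCount t y ∂Measure.pi μ ≤ Fintype.card ι * b := by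
    calc ∫ y, exceedanceCount t y ∂Measure.pi μ = ∑ j, (μ j).real {u | t < |u|} := by
          simp only [exceedanceCount]
          rw [integral_finsetSum _ fun j _ ↦ hint_eval j]
          refine Finset.sum_congr rfl fun j _ ↦ ?_
          rw [integral_comp_eval (hint j).aestronglyMeasurable,
            integral_indicator_one (measurableSet_lt_abs t)]
      _ ≤ Fintype.card ι * b := by
          simpa using Finset.sum_le_card_nsmul Finset.univ _ b fun j _ ↦ hb j
  rw [le_div_iff₀' hc]
  exact (mul_meas_ge_le_integral_of_nonneg (ae_of_all _ (exceedanceCount_nonneg t))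
    (integrable_finsetSum _ fun j _ ↦ hint_eval j) c).trans hmean

lemma gaussianReal_real_lt_abs_le {m t : ℝ} {v : ℝ≥0} (hm : |m| ≤ t) :
    (gaussianReal m v).real {u | t < |u|} ≤ 2 * Real.exp (-(t - |m|) ^ 2 / (2 * v)) := by
  have hmap : (gaussianReal m v).map (fun u ↦ u - m) = gaussianReal 0 v := by
    rw [gaussianReal_map_sub_const, sub_self]
  have hsub : HasSubgaussianMGF (fun u ↦ u - m) v (gaussianReal m v) :=
    { integrable_exp_mul := fun s ↦ by
        simpa only [mul_sub, Real.exp_sub] using (integrable_exp_mul_gaussianReal s).div_const _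
      mgf_le := fun s ↦ by rw [mgf_gaussianReal hmap, zero_mul, zero_add] }
  have hdev : 0 ≤ t - |m| := sub_nonneg.2 hm
  have hsubset : {u : ℝ | t < |u|} ⊆
      {u | t - |m| ≤ u - m} ∪ {u | t - |m| ≤ (-fun u ↦ u - m) u} := fun u hu ↦ by
    rcases lt_abs.1 (Set.mem_ofPred_eq ▸ hu) with h | h
    · left
      rw [Set.mem_ofPred_eq]
      linarith [le_abs_self m]
    · right
      rw [Set.mem_ofPred_eq, Pi.neg_apply]
      linarith [neg_abs_le m]
  calc (gaussianReal m v).real {u | t < |u|}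
      ≤ (gaussianReal m v).real {u | t - |m| ≤ u - m} +
          (gaussianReal m v).real {u | t - |m| ≤ (-fun u ↦ u - m) u} :=
        (measureReal_mono hsubset).trans (measureReal_union_le _ _)
    _ ≤ 2 * Real.exp (-(t - |m|) ^ 2 / (2 * v)) := by
        linarith [hsub.measure_ge_le hdev, hsub.neg.measure_ge_le hdev]

/-- The two-sided tail probability `ℙ(|Y| > t)` of `Y ∼ N(0, v)`. -/
noncomputable def gaussianTail (v : ℝ≥0) (t : ℝ) : ℝ :=
  (gaussianReal 0 v).real {u | t < |u|}

lemma gaussianPDFReal_add_one_le_gaussianTail {t : ℝ} {v : ℝ≥0} (hv : v ≠ 0) (ht : 0 ≤ t) :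
    gaussianPDFReal 0 v (t + 1) ≤ gaussianTail v t := by
  refine (ENNReal.ofReal_le_iff_le_toReal (by finiteness)).1 ?_
  calc gaussianPDF 0 v (t + 1) = ∫⁻ _ in Set.Ioc t (t + 1), gaussianPDF 0 v (t + 1) := by simp
    _ ≤ ∫⁻ u in Set.Ioc t (t + 1), gaussianPDF 0 v u := by
        refine setLIntegral_mono (measurable_gaussianPDF 0 v) fun u hu ↦ ?_
        have hu₀ : 0 ≤ u := ht.trans hu.1.le
        simp only [gaussianPDF, gaussianPDFReal, sub_zero]
        gcongr
        exact hu.2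
    _ = gaussianReal 0 v (Set.Ioc t (t + 1)) := (gaussianReal_apply 0 hv _).symm
    _ ≤ gaussianReal 0 v {u | t < |u|} := measure_mono fun u hu ↦ hu.1.trans_le (le_abs_self u)

lemma gaussianTail_pos {t : ℝ} {v : ℝ≥0} (hv : v ≠ 0) (ht : 0 ≤ t) : 0 < gaussianTail v t :=
  (gaussianPDFReal_pos 0 v (t + 1) hv).trans_le (gaussianPDFReal_add_one_le_gaussianTail hv ht)

end Tails

section TiltedOutput

variable {ι : Type*} [Fintype ι] {v : ℝ≥0} {x : ι → ℝ} {A t a : ℝ}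

/-- The i.i.d. `N(0, v)` output law tilted by `exp (-exceedanceCount t)`, which favours outputs
with few coordinates above the level `t`. -/
noncomputable def tiltedOutput (ι : Type*) [Fintype ι] (v : ℝ≥0) (t : ℝ) : Measure (ι → ℝ) :=
  (Measure.pi fun _ ↦ gaussianReal 0 v).tilted fun y ↦ -1 * exceedanceCount t y

/-- The log-likelihood ratio of `awgnOutput x` to `tiltedOutput ι v t`. -/
noncomputable def tiltedInfoDensity (v : ℝ≥0) (t : ℝ) (x y : ι → ℝ) : ℝ :=
  ∑ j, infoDensity v (x j) (y j) + exceedanceCount t y +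
    cgf (exceedanceCount t) (Measure.pi fun _ : ι ↦ gaussianReal 0 v) (-1)

@[fun_prop]
lemma measurable_tiltedInfoDensity (v : ℝ≥0) (t : ℝ) (x : ι → ℝ) :
    Measurable (tiltedInfoDensity v t x) := by
  unfold tiltedInfoDensity
  fun_prop

lemma integrable_exp_neg_one_mul_exceedanceCount (μ : Measure (ι → ℝ)) [IsFiniteMeasure μ]
    (t : ℝ) : Integrable (fun y ↦ Real.exp (-1 * exceedanceCount t y)) μ :=
  integrable_exp_neg_one_mul_of_nonneg (by fun_prop) (exceedanceCount_nonneg t)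

instance (v : ℝ≥0) (t : ℝ) : IsProbabilityMeasure (tiltedOutput ι v t) :=
  isProbabilityMeasure_tilted (integrable_exp_neg_one_mul_exceedanceCount _ t)

lemma awgnOutput_eq_tiltedOutput_withDensity (hv : v ≠ 0) (t : ℝ) (x : ι → ℝ) :
    awgnOutput x = (tiltedOutput ι v t).withDensity
      fun y ↦ ENNReal.ofReal (Real.exp (tiltedInfoDensity v t x y)) := by
  rw [awgnOutput_eq_withDensity hv, withDensity_exp_eq_tilted_withDensity (by fun_prop)
    (by fun_prop) (integrable_exp_neg_one_mul_exceedanceCount _ t)]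
  simp only [tiltedOutput, tiltedInfoDensity, neg_one_mul, sub_neg_eq_add]

lemma awgnOutput_real_le_exceedanceCount_le [Nonempty ι] (hv : v ≠ 0) (hxA : ‖x‖ ≤ A)
    (hAt : A ≤ t) :
    (awgnOutput x).real {y | Fintype.card ι * gaussianTail v t / 4 ≤ exceedanceCount t y} ≤
      8 * Real.exp (-(t - A) ^ 2 / 2) / gaussianTail v t := by
  have hρ : 0 < gaussianTail v t := gaussianTail_pos hv ((norm_nonneg x).trans (hxA.trans hAt))
  have htail (j : ι) :
      (gaussianReal (x j) 1).real {u | t < |u|} ≤ 2 * Real.exp (-(t - A) ^ 2 / 2) := by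
    have hxj : |x j| ≤ A := (norm_le_pi_norm x j).trans hxA
    refine (gaussianReal_real_lt_abs_le (hxj.trans hAt)).trans ?_
    rw [NNReal.coe_one, mul_one]
    gcongr
  refine (measureReal_le_exceedanceCount_le htail (by positivity)).trans_eq ?_
  field_simp
  ring

lemma awgnOutput_real_lt_tiltedInfoDensity_le [Nonempty ι] (hv : v ≠ 0)
    (hx : ∑ j, x j ^ 2 ≤ Fintype.card ι * (v - 1 : ℝ)) (hxA : ‖x‖ ≤ A) (hAt : A ≤ t)
    (ha : 0 < a) :
    (awgnOutput x).real {y | Fintype.card ι * (Real.log v / 2) + a -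
        Fintype.card ι * gaussianTail v t / 4 < tiltedInfoDensity v t x y} ≤
      Fintype.card ι / 2 / a ^ 2 + 8 * Real.exp (-(t - A) ^ 2 / 2) / gaussianTail v t := by
  have hcgf : cgf (exceedanceCount t) (Measure.pi fun _ : ι ↦ gaussianReal 0 v) (-1) ≤
      -(Fintype.card ι * gaussianTail v t / 2) := cgf_exceedanceCount_neg_one_le _ t
  have hsubset : {y | Fintype.card ι * (Real.log v / 2) + a -
      Fintype.card ι * gaussianTail v t / 4 < tiltedInfoDensity v t x y} ⊆
      {y | Fintype.card ι * (Real.log v / 2) + a ≤ ∑ j, infoDensity v (x j) (y j)} ∪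
        {y | Fintype.card ι * gaussianTail v t / 4 ≤ exceedanceCount t y} := fun y hy ↦ by
    by_contra hy'
    simp only [Set.mem_union, Set.mem_ofPred_eq, not_or, not_le, tiltedInfoDensity] at hy hy'
    linarith
  exact (measureReal_mono hsubset).trans <| (measureReal_union_le _ _).trans <|
    add_le_add (measureReal_add_le_sum_infoDensity_le hv hx ha)
      (awgnOutput_real_le_exceedanceCount_le hv hxA hAt)

end TiltedOutput

section Codes

/-- `f` and `g` are the encoder and the decoder of an `(n, M, ε, P)` code for the Gaussian channel
with unit noise variance. -/
structure IsAWGNCode {n M : ℕ} (f : Fin M → Fin n → ℝ) (g : (Fin n → ℝ) → Fin M) (ε P : ℝ) :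
    Prop where
  measurable_decoder : Measurable g
  power_le (i : Fin M) : ∑ j, f i j ^ 2 ≤ n * P
  error_le : 1 / (M : ℝ) * ∑ i, ((stdGaussianPi n) {z | g (f i + z) ≠ i}).toReal ≤ ε

lemma map_add_stdGaussianPi {n : ℕ} (x : Fin n → ℝ) :
    (stdGaussianPi n).map (x + ·) = awgnOutput x := by
  rw [stdGaussianPi, awgnOutput]
  refine (Measure.pi_map_pi (f := fun j ↦ (x j + ·)) fun j ↦ by fun_prop).trans ?_
  simp_rw [gaussianReal_map_const_add, zero_add]

namespace IsAWGNCode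

variable {n M : ℕ} {f : Fin M → Fin n → ℝ} {g : (Fin n → ℝ) → Fin M} {ε : ℝ}

lemma card_le_add_sum {P : ℝ} (h : IsAWGNCode f g ε P) (B : Finset (Fin M)) :
    (B.card : ℝ) ≤ M * ε + ∑ i ∈ B, (awgnOutput (f i)).real (g ⁻¹' {i}) := by
  have hM : (0 : ℝ) < M := by exact_mod_cast (g 0).pos
  have hg (i : Fin M) : MeasurableSet (g ⁻¹' {i}) :=
    h.measurable_decoder (measurableSet_singleton i)
  have herror (i : Fin M) : ((stdGaussianPi n) {z | g (f i + z) ≠ i}).toReal =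
      (awgnOutput (f i)).real (g ⁻¹' {i})ᶜ := by
    rw [← map_add_stdGaussianPi, map_measureReal_apply (by fun_prop) (hg i).compl]
    rfl
  have hsum : ∑ i, (awgnOutput (f i)).real (g ⁻¹' {i})ᶜ ≤ M * ε := by
    have := h.error_le
    simp only [herror] at this
    rwa [one_div, inv_mul_le_iff₀ hM] at this
  calc (B.card : ℝ)
      = ∑ i ∈ B, (awgnOutput (f i)).real (g ⁻¹' {i})ᶜ +
          ∑ i ∈ B, (awgnOutput (f i)).real (g ⁻¹' {i}) := by
        simp [← Finset.sum_add_distrib, add_comm, measureReal_add_measureReal_compl (hg _)]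
    _ ≤ M * ε + ∑ i ∈ B, (awgnOutput (f i)).real (g ⁻¹' {i}) := by
        gcongr
        exact (Finset.sum_le_univ_sum_of_nonneg fun _ ↦ measureReal_nonneg).trans hsum

lemma card_le [NeZero n] {P : ℝ≥0} (h : IsAWGNCode f g ε P) {B : Finset (Fin M)} {A t a : ℝ}
    (hB : ∀ i ∈ B, ‖f i‖ ≤ A) (hAt : A ≤ t) (ha : 0 < a) :
    (B.card : ℝ) ≤ M * (ε + (n / 2 / a ^ 2 +
        8 * Real.exp (-(t - A) ^ 2 / 2) / gaussianTail (1 + P) t)) +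
      Real.exp (n * (Real.log (1 + P) / 2) + a - n * gaussianTail (1 + P) t / 4) := by
  have hv : 1 + P ≠ 0 := by positivity
  set p : ℝ := n / 2 / a ^ 2 + 8 * Real.exp (-(t - A) ^ 2 / 2) / gaussianTail (1 + P) t
  set τ : ℝ := n * (Real.log (1 + P) / 2) + a - n * gaussianTail (1 + P) t / 4
  have htail : ∀ i ∈ B, (awgnOutput (f i)).real {y | τ < tiltedInfoDensity (1 + P) t (f i) y} ≤ p :=
    fun i hi ↦ by
      simpa using awgnOutput_real_lt_tiltedInfoDensity_le hv (by simpa using h.power_le i)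
        (hB i hi) hAt ha
  have hp : 0 ≤ p := add_nonneg (by positivity) (div_nonneg (by positivity) measureReal_nonneg)
  calc (B.card : ℝ) ≤ M * ε + ∑ i ∈ B, (awgnOutput (f i)).real (g ⁻¹' {i}) := h.card_le_add_sum B
    _ ≤ M * ε + (∑ i ∈ B, (awgnOutput (f i)).real {y | τ < tiltedInfoDensity (1 + P) t (f i) y} +
          Real.exp τ) := by
        gcongr
        exact sum_measureReal_preimage_singleton_le (fun i ↦ measurable_tiltedInfoDensity _ t (f i))
          (fun i ↦ awgnOutput_eq_tiltedOutput_withDensity hv t (f i)) h.measurable_decoder B τ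
    _ ≤ M * ε + (∑ _i : Fin M, p + Real.exp τ) := by
        gcongr
        exact (Finset.sum_le_sum htail).trans (Finset.sum_le_univ_sum_of_nonneg fun _ ↦ hp)
    _ = M * (ε + p) + Real.exp τ := by
        rw [Finset.sum_const, Finset.card_univ, Fintype.card_fin, nsmul_eq_mul]
        ring

lemma card_le_of_le_log [NeZero n] {P : ℝ≥0} (h : IsAWGNCode f g ε P) {B : Finset (Fin M)}
    {A t β : ℝ} (hB : ∀ i ∈ B, ‖f i‖ ≤ A) (hAt : A ≤ t) (ht : 0 ≤ t)
    (hrate : n * (1 / 2 * Real.log (1 + P)) - β ≤ Real.log M) :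
    (B.card : ℝ) ≤ M * (ε + (32 / (n * gaussianTail (1 + P) t ^ 2) +
      8 * Real.exp (-(t - A) ^ 2 / 2) / gaussianTail (1 + P) t +
        Real.exp (β - n * gaussianTail (1 + P) t / 8))) := by
  have hρ : 0 < gaussianTail (1 + P) t := gaussianTail_pos (by positivity) ht
  set ρ := gaussianTail (1 + P) t
  have hn : (0 : ℝ) < n := by exact_mod_cast NeZero.pos n
  have hM : (0 : ℝ) < M := by exact_mod_cast (g 0).pos
  have hsize : Real.exp (n * (Real.log (1 + P) / 2) + n * ρ / 8 - n * ρ / 4) ≤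
      M * Real.exp (β - n * ρ / 8) := by
    rw [← Real.exp_log hM, ← Real.exp_add]
    gcongr
    linarith
  have hdeviation : n / 2 / (n * ρ / 8) ^ 2 = 32 / (n * ρ ^ 2) := by
    field_simp
    norm_num
  have hcard := h.card_le hB hAt (a := n * ρ / 8) (by positivity)
  rw [hdeviation] at hcard
  linarith

end IsAWGNCode

end Codes

section Rotation

variable {n : ℕ} {U : Matrix (Fin n) (Fin n) ℝ}

lemma exists_linearIsometryEquiv_eq_mulVec (hU : U ∈ Matrix.orthogonalGroup (Fin n) ℝ) :
    ∃ e : EuclideanSpace ℝ (Fin n) ≃ₗᵢ[ℝ] EuclideanSpace ℝ (Fin n),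
      ∀ x, e (WithLp.toLp 2 x) = WithLp.toLp 2 (U *ᵥ x) :=
  ⟨Unitary.linearIsometryEquiv
    ⟨Matrix.toEuclideanCLM (𝕜 := ℝ) U, Unitary.map_mem Matrix.toEuclideanCLM hU⟩,
    fun _ ↦ rfl⟩

lemma sum_sq_mulVec (hU : U ∈ Matrix.orthogonalGroup (Fin n) ℝ) (x : Fin n → ℝ) :
    ∑ j, (U *ᵥ x) j ^ 2 = ∑ j, x j ^ 2 := by
  obtain ⟨e, he⟩ := exists_linearIsometryEquiv_eq_mulVec hU
  have h := e.norm_map (WithLp.toLp 2 x)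
  rw [he, ← sq_eq_sq₀ (norm_nonneg _) (norm_nonneg _), EuclideanSpace.real_norm_sq_eq,
    EuclideanSpace.real_norm_sq_eq] at h
  exact h

lemma measurePreserving_mulVec_stdGaussianPi (hU : U ∈ Matrix.orthogonalGroup (Fin n) ℝ) :
    MeasurePreserving (U *ᵥ ·) (stdGaussianPi n) (stdGaussianPi n) := by
  obtain ⟨e, he⟩ := exists_linearIsometryEquiv_eq_mulVec hU
  have htoLp : MeasurePreserving (MeasurableEquiv.toLp 2 (Fin n → ℝ)) (stdGaussianPi n)
      (stdGaussian (EuclideanSpace ℝ (Fin n))) := ⟨by fun_prop, map_pi_eq_stdGaussian⟩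
  have he' : MeasurePreserving e (stdGaussian _) (stdGaussian _) := ⟨by fun_prop, stdGaussian_map e⟩
  have hcomp : (U *ᵥ ·) =
      ((MeasurableEquiv.toLp 2 (Fin n → ℝ)).symm ∘ e) ∘ MeasurableEquiv.toLp 2 (Fin n → ℝ) :=
    funext fun x ↦ congrArg WithLp.ofLp (he x).symm
  rw [hcomp]
  exact (htoLp.symm.comp he').comp htoLp

lemma IsAWGNCode.rotate {M : ℕ} {f : Fin M → Fin n → ℝ} {g : (Fin n → ℝ) → Fin M} {ε P : ℝ}
    (h : IsAWGNCode f g ε P) (hU : U ∈ Matrix.orthogonalGroup (Fin n) ℝ) :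
    IsAWGNCode (fun i ↦ U *ᵥ f i) (fun y ↦ g (Uᵀ *ᵥ y)) ε P where
  measurable_decoder := h.measurable_decoder.comp
    (measurePreserving_mulVec_stdGaussianPi (Unitary.star_mem hU)).measurable
  power_le i := by simpa only [sum_sq_mulVec hU] using h.power_le i
  error_le := by
    have hUU : Uᵀ * U = 1 := (Matrix.mem_orthogonalGroup_iff' _ _).1 hU
    have herror (i : Fin M) : (stdGaussianPi n) {z | g (Uᵀ *ᵥ (U *ᵥ f i + z)) ≠ i} =
        (stdGaussianPi n) {z | g (f i + z) ≠ i} := by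
      have hmeas : MeasurableSet {z | g (f i + z) ≠ i} :=
        (h.measurable_decoder.comp (measurable_const_add _)) (measurableSet_singleton i).compl
      rw [← (measurePreserving_mulVec_stdGaussianPi (Unitary.star_mem hU)).measure_preimage
        hmeas.nullMeasurableSet]
      simp only [Matrix.mulVec_add, Matrix.mulVec_mulVec, hUU, Matrix.one_mulVec]
      rfl
    simpa only [herror] using h.error_le

end Rotation

section Asymptotics

lemma tendsto_quadratic_atTop {k : ℝ} (hk : 0 < k) (b c : ℝ) :
    Tendsto (fun A ↦ k * A ^ 2 + b * A + c) atTop atTop := by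
  have hlinear : Tendsto (fun A ↦ k * A + b) atTop atTop :=
    tendsto_atTop_add_const_right _ _ (tendsto_id.const_mul_atTop hk)
  refine (tendsto_atTop_add_const_right _ c (tendsto_id.atTop_mul_atTop₀ hlinear)).congr fun A ↦ ?_
  simp only [id]
  ring

lemma tendsto_exp_mul_gaussianTail_atTop {v : ℝ≥0} (hv : v ≠ 0) {s k : ℝ} (hs : 0 ≤ s)
    (hk : s ^ 2 / (2 * v) < k) :
    Tendsto (fun A ↦ Real.exp (k * A ^ 2) * gaussianTail v (s * A)) atTop atTop := by
  have hpdf (A : ℝ) : Real.exp (k * A ^ 2) * gaussianPDFReal 0 v (s * A + 1) =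
      (√(2 * Real.pi * v))⁻¹ *
        Real.exp ((k - s ^ 2 / (2 * v)) * A ^ 2 + -(s / v) * A + -(1 / (2 * v))) := by
    rw [gaussianPDFReal, mul_left_comm, ← Real.exp_add]
    congr 2
    field_simp
    ring
  have hlower : Tendsto (fun A ↦ Real.exp (k * A ^ 2) * gaussianPDFReal 0 v (s * A + 1))
      atTop atTop := by
    simp only [hpdf]
    exact (Real.tendsto_exp_atTop.comp
      (tendsto_quadratic_atTop (sub_pos.2 hk) _ _)).const_mul_atTop (by positivity)
  refine tendsto_atTop_mono' _ ?_ hlower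
  filter_upwards [eventually_ge_atTop 0] with A hA
  gcongr
  exact gaussianPDFReal_add_one_le_gaussianTail hv (by positivity)

lemma exists_scale {r α δ : ℝ} (hr : 1 < r) (hδ : 0 < δ) (hδr : δ < (1 - α) * (r - 1) ^ 2) :
    ∃ s > 1, s ^ 2 / (2 * r ^ 2) < (s - 1) ^ 2 / 2 ∧ s ^ 2 / (2 * r ^ 2) < (1 - α) / (2 * δ) := by
  have hr₁ : 0 < r - 1 := sub_pos.2 hr
  have hlimit : (r / (r - 1)) ^ 2 / (2 * r ^ 2) < (1 - α) / (2 * δ) := by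
    have : (r / (r - 1)) ^ 2 / (2 * r ^ 2) = 1 / (2 * (r - 1) ^ 2) := by field_simp
    rw [this, div_lt_div_iff₀ (by positivity) (by positivity)]
    linarith
  -- The first inequality says `r / (r - 1) < s`, so take `s` just above this value.
  have hcont : ContinuousAt (fun s : ℝ ↦ s ^ 2 / (2 * r ^ 2)) (r / (r - 1)) := by fun_prop
  obtain ⟨s, hs, hsr⟩ := (((hcont.eventually_lt_const hlimit).filter_mono
    nhdsWithin_le_nhds).and self_mem_nhdsWithin : ∀ᶠ s in 𝓝[>] (r / (r - 1)), _ ∧ _).exists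
  have hs₁ : 1 < s := ((one_lt_div hr₁).2 (by linarith)).trans hsr
  refine ⟨s, hs₁, ?_, hs⟩
  have hlt : s / r < s - 1 := by
    rw [div_lt_iff₀ (by linarith)]
    linarith [(div_lt_iff₀ hr₁).1 hsr]
  calc s ^ 2 / (2 * r ^ 2) = (s / r) ^ 2 / 2 := by field_simp
    _ < (s - 1) ^ 2 / 2 := by gcongr

lemma tendsto_sqrt_log_atTop {δ : ℝ} (hδ : 0 < δ) :
    Tendsto (fun n : ℕ ↦ √(2 * δ * Real.log n)) atTop atTop :=
  Real.tendsto_sqrt_atTop.comp <|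
    (Real.tendsto_log_atTop.comp tendsto_natCast_atTop_atTop).const_mul_atTop (by positivity)

lemma tendsto_rpow_mul_gaussianTail_atTop {v : ℝ≥0} (hv : v ≠ 0) {s α δ : ℝ} (hs : 0 ≤ s)
    (hδ : 0 < δ) (hsδ : s ^ 2 / (2 * v) < (1 - α) / (2 * δ)) :
    Tendsto (fun n : ℕ ↦ (n : ℝ) ^ (1 - α) * gaussianTail v (s * √(2 * δ * Real.log n)))
      atTop atTop := by
  refine ((tendsto_exp_mul_gaussianTail_atTop hv hs hsδ).comp
    (tendsto_sqrt_log_atTop hδ)).congr' ?_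
  filter_upwards [eventually_ge_atTop 1] with n hn
  have hn' : (0 : ℝ) < n := by exact_mod_cast hn
  rw [Function.comp_apply, Real.sq_sqrt (mul_nonneg (by positivity) (Real.log_natCast_nonneg n)),
    Real.rpow_def_of_pos hn']
  congr 2
  field_simp

lemma tendsto_exp_neg_sq_div_gaussianTail {v : ℝ≥0} (hv : v ≠ 0) {s : ℝ} (hs : 0 ≤ s)
    (hs' : s ^ 2 / (2 * v) < (s - 1) ^ 2 / 2) :
    Tendsto (fun A ↦ 8 * Real.exp (-(s * A - A) ^ 2 / 2) / gaussianTail v (s * A))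
      atTop (𝓝 0) := by
  refine ((tendsto_exp_mul_gaussianTail_atTop hv hs hs').const_div_atTop 8).congr fun A ↦ ?_
  rw [show -(s * A - A) ^ 2 / 2 = -((s - 1) ^ 2 / 2 * A ^ 2) by ring, Real.exp_neg, ← div_div,
    div_eq_mul_inv 8]

lemma tendsto_div_mul_sq_of_tendsto_rpow_mul {ρ : ℕ → ℝ} {α : ℝ} (hα : 1 / 2 ≤ α)
    (hρ : Tendsto (fun n : ℕ ↦ (n : ℝ) ^ (1 - α) * ρ n) atTop atTop) (c : ℝ) :
    Tendsto (fun n : ℕ ↦ c / (n * ρ n ^ 2)) atTop (𝓝 0) := by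
  refine (tendsto_atTop_mono' _ ?_ ((tendsto_pow_atTop two_ne_zero).comp hρ)).const_div_atTop c
  filter_upwards [eventually_ge_atTop 1] with n hn
  have hn' : (1 : ℝ) ≤ n := by exact_mod_cast hn
  rw [Function.comp_apply, mul_pow, ← Real.rpow_mul_natCast (by positivity)]
  gcongr
  refine Real.rpow_le_self_of_one_le hn' ?_
  push_cast
  linarith

lemma tendsto_exp_rpow_sub_of_tendsto_rpow_mul {ρ : ℕ → ℝ} {α : ℝ} (hα : 0 ≤ α)
    (hρ : Tendsto (fun n : ℕ ↦ (n : ℝ) ^ (1 - α) * ρ n) atTop atTop) (γ : ℝ) {c : ℝ}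
    (hc : 0 < c) :
    Tendsto (fun n : ℕ ↦ Real.exp (γ * (n : ℝ) ^ α - n * ρ n / c)) atTop (𝓝 0) := by
  have hgap : Tendsto (fun n : ℕ ↦ (n : ℝ) ^ (1 - α) * ρ n / c - γ) atTop atTop :=
    tendsto_atTop_add_const_right _ _ (hρ.atTop_div_const hc)
  refine Real.tendsto_exp_atBot.comp (tendsto_neg_atTop_iff.1 ?_)
  refine tendsto_atTop_mono' _ ?_ hgap
  filter_upwards [eventually_ge_atTop 1, hgap.eventually_ge_atTop 0] with n hn hgap_nonneg
  have hn' : (1 : ℝ) ≤ n := by exact_mod_cast hn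
  have hsplit : (n : ℝ) = n ^ α * n ^ (1 - α) := by
    rw [← Real.rpow_add (by positivity), add_sub_cancel, Real.rpow_one]
  calc (n : ℝ) ^ (1 - α) * ρ n / c - γ
      ≤ n ^ α * (n ^ (1 - α) * ρ n / c - γ) :=
        le_mul_of_one_le_left hgap_nonneg (Real.one_le_rpow hn' hα)
    _ = -(γ * n ^ α - n * ρ n / c) := by linear_combination -(ρ n / c) * hsplit

lemma eventually_card_le_of_norm_le {P : ℝ≥0} (hP : 0 < P) {ε κ α δ : ℝ} (hεκ : ε < κ)
    (hα : 1 / 2 ≤ α) (hδ₀ : 0 < δ) (hδ : δ < (1 - α) * (√(1 + P) - 1) ^ 2) (γ : ℝ) :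
    ∀ᶠ n : ℕ in atTop, ∀ (M : ℕ) (f : Fin M → Fin n → ℝ) (g : (Fin n → ℝ) → Fin M),
      IsAWGNCode f g ε P → n * (1 / 2 * Real.log (1 + P)) - γ * (n : ℝ) ^ α ≤ Real.log M →
        ∀ B : Finset (Fin M), (∀ i ∈ B, ‖f i‖ ≤ √(2 * δ * Real.log n)) → B.card ≤ κ * M := by
  have hr : 1 < √(1 + P : ℝ) := Real.lt_sqrt_of_sq_lt (by simpa using hP)
  obtain ⟨s, hs₁, hs_gap, hs_tail⟩ := exists_scale hr hδ₀ hδ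
  rw [Real.sq_sqrt (by positivity)] at hs_gap hs_tail
  have hs₀ : 0 ≤ s := by linarith
  have hv : 1 + P ≠ 0 := by positivity
  set A : ℕ → ℝ := fun n ↦ √(2 * δ * Real.log n)
  have hρ : Tendsto (fun n : ℕ ↦ (n : ℝ) ^ (1 - α) * gaussianTail (1 + P) (s * A n)) atTop atTop :=
    tendsto_rpow_mul_gaussianTail_atTop hv hs₀ hδ₀ (by simpa using hs_tail)
  have hremainder := ((tendsto_div_mul_sq_of_tendsto_rpow_mul hα hρ 32).add
    ((tendsto_exp_neg_sq_div_gaussianTail hv hs₀ (by simpa using hs_gap)).comp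
      (tendsto_sqrt_log_atTop hδ₀))).add
    (tendsto_exp_rpow_sub_of_tendsto_rpow_mul (by linarith) hρ γ (by norm_num : (0 : ℝ) < 8))
  rw [add_zero, add_zero] at hremainder
  filter_upwards [hremainder.eventually_lt_const (sub_pos.2 hεκ), eventually_ge_atTop 1]
    with n hsmall hn M f g hcode hrate B hB
  have : NeZero n := ⟨by omega⟩
  have hA : 0 ≤ A n := Real.sqrt_nonneg _
  calc (B.card : ℝ) ≤ M * (ε + _) :=
        hcode.card_le_of_le_log hB (le_mul_of_one_le_left hA hs₁.le) (by positivity) hrate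
    _ ≤ M * (ε + (κ - ε)) := by gcongr; exact hsmall.le
    _ = κ * M := by ring

end Asymptotics

theorem papr_lower_bound_good_codes_general {P ε α δ θ : ℝ} (hP : 0 < P) (hεθ : ε + θ < 1)
    (hα : α ∈ Set.Ico (1 / 2 : ℝ) 1) (hδ : δ < (1 - α) * (√(1 + P) - 1) ^ 2) (γ : ℝ) :
    ∃ N₀ : ℕ, ∀ n : ℕ, N₀ ≤ n →
      ∀ (M : ℕ) (f : Fin M → Fin n → ℝ) (g : (Fin n → ℝ) → Fin M), IsAWGNCode f g ε P →
        n * (1 / 2 * Real.log (1 + P)) - γ * (n : ℝ) ^ α ≤ Real.log M →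
          ∀ U ∈ Matrix.orthogonalGroup (Fin n) ℝ,
            θ * M ≤ {i : Fin M | √(2 * δ * Real.log n) ≤ ‖U *ᵥ f i‖}.ncard := by
  lift P to ℝ≥0 using hP.le
  have hbound_pos : 0 < (1 - α) * (√(1 + P : ℝ) - 1) ^ 2 := by
    have : 1 < √(1 + P : ℝ) := Real.lt_sqrt_of_sq_lt (by simpa using hP)
    exact mul_pos (sub_pos.2 hα.2) (pow_pos (sub_pos.2 this) 2)
  obtain ⟨δ', hδ'_gt, hδ'_lt⟩ := exists_between (max_lt hδ hbound_pos)
  obtain ⟨hδδ', hδ'_pos⟩ := max_lt_iff.1 hδ'_gt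
  obtain ⟨N₀, hN₀⟩ := eventually_atTop.1 <| eventually_card_le_of_norm_le (by exact_mod_cast hP)
    (by linarith : ε < 1 - θ) hα.1 hδ'_pos hδ'_lt γ
  refine ⟨N₀, fun n hn M f g hcode hrate U hU ↦ ?_⟩
  set S : Set (Fin M) := {i | √(2 * δ * Real.log n) ≤ ‖U *ᵥ f i‖}
  have hlow : ∀ i ∈ Sᶜ.toFinite.toFinset, ‖U *ᵥ f i‖ ≤ √(2 * δ' * Real.log n) := by
    intro i hi
    rw [Set.Finite.mem_toFinset, Set.mem_compl_iff, Set.mem_ofPred_eq, not_le] at hi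
    refine hi.le.trans (Real.sqrt_le_sqrt ?_)
    have := Real.log_natCast_nonneg n
    gcongr
  have hcard : ((Sᶜ).ncard : ℝ) ≤ (1 - θ) * M := by
    rw [Set.ncard_eq_toFinset_card _ Sᶜ.toFinite]
    exact hN₀ n hn M _ _ (hcode.rotate hU) hrate _ hlow
  have hsum : (S.ncard : ℝ) + (Sᶜ).ncard = M := by
    exact_mod_cast (Set.ncard_add_ncard_compl S).trans (Nat.card_fin M)
  linarith

/-- Fix `P > 0`, `ε ∈ (0,1/2)`, `α ∈ [1/2,1)`, `γ > 0` and any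
`δ < δ_{α,P} = (1-α)(√(1+P)-1)²`. Then there is `N₀` such that for all `n ≥ N₀`: every
`(n, M, ε, P)` code (encoder `f` with power constraint, measurable decoder `g`, average
probability of error at most `ε`) whose size satisfies `ln M ≥ n·(1/2)ln(1+P) - γ·n^α`
and every orthogonal `n×n` matrix `U` are such that at least `M/2` of the codewords satisfy
`‖U (f i)‖_∞ ≥ √(2 δ ln n)` (sup norm = the Pi-type norm on `Fin n → ℝ`). -/
theorem papr_lower_bound_good_codes
    (P : ℝ) (hP : 0 < P) (ε α γ δ : ℝ)
    (hε : ε ∈ Set.Ioo (0 : ℝ) (1 / 2)) (hα : α ∈ Set.Ico (1 / 2 : ℝ) 1) (hγ : 0 < γ)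
    (hδ : δ < (1 - α) * (Real.sqrt (1 + P) - 1) ^ 2) :
    ∃ N₀ : ℕ, ∀ n : ℕ, N₀ ≤ n →
      ∀ M : ℕ, ∀ f : Fin M → (Fin n → ℝ), ∀ g : (Fin n → ℝ) → Fin M,
        Measurable g →
        (∀ i, ∑ j, (f i j) ^ 2 ≤ n * P) →
        (1 / (M : ℝ)) * ∑ i, ((stdGaussianPi n) {z | g (f i + z) ≠ i}).toReal ≤ ε →
        (n : ℝ) * ((1 / 2) * Real.log (1 + P)) - γ * (n : ℝ) ^ α ≤ Real.log M →
        ∀ U : Matrix (Fin n) (Fin n) ℝ, U ∈ Matrix.orthogonalGroup (Fin n) ℝ →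
          (M : ℝ) / 2 ≤
            ({i : Fin M | Real.sqrt (2 * δ * Real.log n) ≤ ‖U.mulVec (f i)‖}.ncard : ℝ) := by
  obtain ⟨N₀, hN₀⟩ := papr_lower_bound_good_codes_general hP
    (by linarith [hε.2] : ε + 1 / 2 < 1) hα hδ γ
  refine ⟨N₀, fun n hn M f g hg hpower herror hrate U hU ↦ ?_⟩
  simpa only [one_div_mul_eq_div] using hN₀ n hn M f g ⟨hg, hpower, herror⟩ hrate U hU
end

section
/- Fix P > 0. There exist constants c > 0, K > 0 and A₀ > 0 such that for all A ≥ A₀, the gap between the unconstrained AWGN capacity and the amplitude-constrained capacity satisfies (1/2) ln(1+P) − C(A,P) ≤ c · A^{K} · exp( −A² / (2P) ). -/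
open MeasureTheory ProbabilityTheory

open scoped Classical in
/-- Kullback–Leibler divergence (natural logarithm), valued in `EReal`:
`D(μ‖ν) = ∫ log(dμ/dν) dμ` if `μ ≪ ν` and the log-likelihood ratio is integrable,
and `+∞` otherwise. -/
noncomputable def klDiv {α : Type*} [MeasurableSpace α] (μ ν : Measure α) : EReal :=
  if μ ≪ ν ∧ Integrable (llr μ ν) μ then ((∫ x, llr μ ν x ∂μ : ℝ) : EReal) else ⊤

/-- The joint law of `(X, X+Z)` where `X ~ μ` and `Z ~ N(0,1)` is independent of `X`. -/
noncomputable def jointLaw (μ : Measure ℝ) : Measure (ℝ × ℝ) :=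
  (μ.prod (gaussianReal 0 1)).map fun p => (p.1, p.1 + p.2)

/-- The mutual information `I(X; X+Z)` for `X ~ μ` and `Z ~ N(0,1)` independent of `X`:
the KL divergence between the joint law of `(X, X+Z)` and the product of its marginals. -/
noncomputable def mutInfo (μ : Measure ℝ) : EReal :=
  klDiv (jointLaw μ) ((jointLaw μ).fst.prod (jointLaw μ).snd)

/-- The amplitude-constrained AWGN capacity `C(A,P)`: the supremum of `I(X; X+Z)` over laws of
real random variables `X` with `|X| ≤ A` almost surely and `E[X²] ≤ P`, with `Z ~ N(0,1)`
independent of `X`. -/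
noncomputable def CAP (A P : ℝ) : EReal :=
  ⨆ μ ∈ {μ : Measure ℝ | IsProbabilityMeasure μ ∧ μ {x | A < |x|} = 0 ∧ ∫ x, x ^ 2 ∂μ ≤ P},
    mutInfo μ

open scoped NNReal ENNReal

/-!
The input is `N(0, P)` conditioned on `[-A, A]`. It is dominated by `c • N(0, P)` with `c⁻¹` the
mass that `N(0, P)` gives to `[-A, A]`, and the channel carries this over to its output, which is
thus dominated by `c • N(0, 1 + P)`. Hence replacing the true output law by `N(0, 1 + P)` in the
divergence costs at most `log c`, and the divergence from the new reference is
`½ log (1 + P)` minus a multiple of the power lost by conditioning. Both losses are controlled by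
the second moment of `N(0, P)` outside `[-A, A]`. This tail is bounded by a change of mean: on
`[A, ∞)` the density of `N(0, P)` is at most `exp (-A² / (2P))` times that of `N(A, P)`.
-/

lemma log_inv_le_two_mul_one_sub {p : ℝ} (hp : 1 / 2 ≤ p) (hp' : p ≤ 1) :
    Real.log p⁻¹ ≤ 2 * (1 - p) := by
  have hpos : 0 < p := by linarith
  have hinv : p⁻¹ ≤ 1 + 2 * (1 - p) := by
    rw [inv_le_iff_one_le_mul₀ hpos]
    nlinarith
  linarith [Real.log_le_sub_one_of_pos (inv_pos.2 hpos)]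

section Conditioning

variable {Ω : Type*} {mΩ : MeasurableSpace Ω} {μ : Measure Ω} {s : Set Ω} {f : Ω → ℝ} {a : ℝ}

lemma cond_le_smul (μ : Measure Ω) (s : Set Ω) : μ[|s] ≤ (μ s)⁻¹ • μ := by
  rw [ProbabilityTheory.cond]
  gcongr
  exact Measure.restrict_le_self

lemma integral_cond {E : Type*} [NormedAddCommGroup E] [NormedSpace ℝ E] (μ : Measure Ω)
    (s : Set Ω) (f : Ω → E) : ∫ x, f x ∂μ[|s] = (μ.real s)⁻¹ • ∫ x in s, f x ∂μ := by
  rw [ProbabilityTheory.cond, integral_smul_measure, ENNReal.toReal_inv, measureReal_def]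

lemma setIntegral_le_integral_cond [IsProbabilityMeasure μ] (hf : 0 ≤ f) :
    ∫ x in s, f x ∂μ ≤ ∫ x, f x ∂μ[|s] := by
  rw [integral_cond, smul_eq_mul]
  rcases (measureReal_nonneg (μ := μ) (s := s)).eq_or_lt with hzero | hpos
  · have hμs : μ s = 0 := (measureReal_eq_zero_iff).1 hzero.symm
    simp [Measure.restrict_eq_zero.2 hμs]
  · exact le_mul_of_one_le_left (integral_nonneg hf) ((one_le_inv₀ hpos).2 measureReal_le_one)

lemma integral_sub_setIntegral_compl_le_integral_cond [IsProbabilityMeasure μ]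
    (hs : MeasurableSet s) (hint : Integrable f μ) (hf : 0 ≤ f) :
    ∫ x, f x ∂μ - ∫ x in sᶜ, f x ∂μ ≤ ∫ x, f x ∂μ[|s] := by
  rw [← integral_add_compl hs hint, add_sub_cancel_right]
  exact setIntegral_le_integral_cond hf

lemma integral_cond_le_integral [IsProbabilityMeasure μ] (hs : MeasurableSet s) (hμs : μ s ≠ 0)
    (hint : Integrable f μ) (hle : ∀ x ∈ s, f x ≤ a) (hge : ∀ x ∈ sᶜ, a ≤ f x) :
    ∫ x, f x ∂μ[|s] ≤ ∫ x, f x ∂μ := by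
  have hpos : 0 < μ.real s := ENNReal.toReal_pos hμs (measure_ne_top μ s)
  have hin : ∫ x in s, f x ∂μ ≤ a * μ.real s := by
    simpa [mul_comm] using setIntegral_mono_on hint.integrableOn (integrable_const a) hs hle
  have hout := setIntegral_ge_of_const_le_real hs.compl (measure_ne_top μ _) hge hint.integrableOn
  rw [probReal_compl_eq_one_sub hs] at hout
  rw [integral_cond, smul_eq_mul, inv_mul_le_iff₀ hpos, ← integral_add_compl hs hint]
  nlinarith [measureReal_le_one (μ := μ) (s := s)]

end Conditioning

section SecondMoments

variable {μ ν : Measure ℝ} {A : ℝ}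

lemma integrable_add_sq_prod [IsFiniteMeasure μ] [IsFiniteMeasure ν]
    (hμ : MemLp id 2 μ) (hν : MemLp id 2 ν) :
    Integrable (fun p : ℝ × ℝ => (p.1 + p.2) ^ 2) (μ.prod ν) :=
  ((hμ.comp_fst ν).add (hν.comp_snd μ)).integrable_sq

lemma integral_add_sq_prod [IsProbabilityMeasure μ] [IsProbabilityMeasure ν]
    (hμ : MemLp id 2 μ) (hν : MemLp id 2 ν) (hcentered : ∫ x, x ∂ν = 0) :
    ∫ p : ℝ × ℝ, (p.1 + p.2) ^ 2 ∂μ.prod ν = ∫ x, x ^ 2 ∂μ + ∫ x, x ^ 2 ∂ν := by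
  have hfst : Integrable (fun p : ℝ × ℝ => p.1 ^ 2) (μ.prod ν) := hμ.integrable_sq.comp_fst ν
  have hsnd : Integrable (fun p : ℝ × ℝ => p.2 ^ 2) (μ.prod ν) := hν.integrable_sq.comp_snd μ
  have hcross : Integrable (fun p : ℝ × ℝ => 2 * (p.1 * p.2)) (μ.prod ν) :=
    ((hμ.integrable one_le_two).mul_prod (hν.integrable one_le_two)).const_mul 2
  have hsq : Integrable (fun p : ℝ × ℝ => p.1 ^ 2 + p.2 ^ 2) (μ.prod ν) := hfst.add hsnd
  calc ∫ p : ℝ × ℝ, (p.1 + p.2) ^ 2 ∂μ.prod ν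
      = ∫ p : ℝ × ℝ, (p.1 ^ 2 + p.2 ^ 2 + 2 * (p.1 * p.2)) ∂μ.prod ν := by
        congr with p; ring
    _ = ∫ p : ℝ × ℝ, p.1 ^ 2 ∂μ.prod ν + ∫ p : ℝ × ℝ, p.2 ^ 2 ∂μ.prod ν
          + 2 * ∫ p : ℝ × ℝ, p.1 * p.2 ∂μ.prod ν := by
        rw [integral_add hsq hcross, integral_add hfst hsnd, integral_const_mul]
    _ = ∫ x, x ^ 2 ∂μ + ∫ x, x ^ 2 ∂ν := by
        rw [integral_prod_mul (fun x : ℝ => x) (fun x : ℝ => x), hcentered,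
          integral_fun_fst (fun x : ℝ => x ^ 2), integral_fun_snd (fun x : ℝ => x ^ 2)]
        simp

lemma sq_le_sq_of_notMem_Icc {x : ℝ} (hA : 0 ≤ A) (hx : x ∉ Set.Icc (-A) A) : A ^ 2 ≤ x ^ 2 := by
  rw [sq_le_sq, abs_of_nonneg hA]
  exact (lt_of_not_ge fun h => hx (abs_le.1 h)).le

lemma sq_mul_one_sub_measureReal_Icc_le [IsProbabilityMeasure μ] (hA : 0 ≤ A)
    (hint : Integrable (fun x => x ^ 2) μ) :
    A ^ 2 * (1 - μ.real (Set.Icc (-A) A)) ≤ ∫ x in (Set.Icc (-A) A)ᶜ, x ^ 2 ∂μ := by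
  rw [← probReal_compl_eq_one_sub measurableSet_Icc]
  exact setIntegral_ge_of_const_le_real measurableSet_Icc.compl (measure_ne_top μ _)
    (fun x hx => sq_le_sq_of_notMem_Icc hA hx) hint.integrableOn

end SecondMoments

section KullbackLeibler

variable {α : Type*} {mα : MeasurableSpace α} {μ ν ν₁ ν₂ : Measure α} {c : ℝ≥0∞}

lemma rnDeriv_le_of_le_smul [SigmaFinite ν] (h : μ ≤ c • ν) : μ.rnDeriv ν ≤ᵐ[ν] fun _ => c := by
  refine ae_le_of_forall_setLIntegral_le_of_sigmaFinite (μ.measurable_rnDeriv ν) fun s _ _ => ?_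
  calc ∫⁻ x in s, μ.rnDeriv ν x ∂ν ≤ μ s := Measure.setLIntegral_rnDeriv_le s
    _ ≤ c * ν s := h s
    _ = ∫⁻ _ in s, c ∂ν := (setLIntegral_const s c).symm

lemma llr_sub_log_le_of_le_smul [SigmaFinite μ] [SigmaFinite ν₁] [SigmaFinite ν₂]
    (hμ : μ ≪ ν₁) (hc : c ≠ ∞) (h : ν₁ ≤ c • ν₂) :
    (fun x => llr μ ν₂ x - Real.log c.toReal) ≤ᵐ[μ] llr μ ν₁ := by
  have hμ₂ : μ ≪ ν₂ := hμ.trans (Measure.absolutelyContinuous_of_le_smul h)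
  filter_upwards [hμ₂ (Measure.rnDeriv_mul_rnDeriv hμ), hμ₂ (rnDeriv_le_of_le_smul h),
    Measure.rnDeriv_pos hμ₂, hμ₂ (μ.rnDeriv_ne_top ν₂)] with x hchain hle hpos hfin
  have hprod : 0 < (μ.rnDeriv ν₁ x).toReal * (ν₁.rnDeriv ν₂ x).toReal := by
    rw [← ENNReal.toReal_mul, ← Pi.mul_apply, hchain]
    exact ENNReal.toReal_pos hpos.ne' hfin
  have hμν₁ := pos_of_mul_pos_left hprod ENNReal.toReal_nonneg
  have hν₁ν₂ := pos_of_mul_pos_right hprod ENNReal.toReal_nonneg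
  rw [llr, llr, ← hchain, Pi.mul_apply, ENNReal.toReal_mul, Real.log_mul hμν₁.ne' hν₁ν₂.ne',
    sub_le_iff_le_add]
  gcongr

lemma integral_llr_sub_log_le_klDiv [IsProbabilityMeasure μ] [SigmaFinite ν₁] [SigmaFinite ν₂]
    (hint : Integrable (llr μ ν₂) μ) (hc : c ≠ ∞) (h : ν₁ ≤ c • ν₂) :
    ((∫ x, llr μ ν₂ x ∂μ - Real.log c.toReal : ℝ) : EReal) ≤ klDiv μ ν₁ := by
  rw [klDiv]
  split_ifs with hfinite
  · rw [EReal.coe_le_coe_iff]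
    calc ∫ x, llr μ ν₂ x ∂μ - Real.log c.toReal
        = ∫ x, (llr μ ν₂ x - Real.log c.toReal) ∂μ := by
          simp [integral_sub hint (integrable_const _)]
      _ ≤ ∫ x, llr μ ν₁ x ∂μ :=
          integral_mono_ae (hint.sub (integrable_const _)) hfinite.2
            (llr_sub_log_le_of_le_smul hfinite.1 hc h)
  · exact le_top

end KullbackLeibler

section Gaussian

lemma log_gaussianPDFReal (m : ℝ) {v : ℝ≥0} (hv : v ≠ 0) (x : ℝ) :
    Real.log (gaussianPDFReal m v x)
      = -(Real.log (2 * Real.pi) + Real.log v) / 2 - (x - m) ^ 2 / (2 * v) := by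
  have hv' : (v : ℝ) ≠ 0 := by exact_mod_cast hv
  rw [gaussianPDFReal, Real.log_mul (by positivity) (Real.exp_ne_zero _), Real.log_inv,
    Real.log_sqrt (by positivity), Real.log_mul (by positivity) hv', Real.log_exp]
  ring

lemma gaussianReal_eq_withDensity_gaussianReal (m₁ m₂ : ℝ) {v₁ v₂ : ℝ≥0} (h₁ : v₁ ≠ 0)
    (h₂ : v₂ ≠ 0) :
    gaussianReal m₁ v₁
      = (gaussianReal m₂ v₂).withDensity fun x => gaussianPDF m₁ v₁ x / gaussianPDF m₂ v₂ x := by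
  have hratio : Measurable fun x => gaussianPDF m₁ v₁ x / gaussianPDF m₂ v₂ x :=
    (measurable_gaussianPDF _ _).div (measurable_gaussianPDF _ _)
  rw [gaussianReal_of_var_ne_zero m₁ h₁, gaussianReal_of_var_ne_zero m₂ h₂,
    ← withDensity_mul _ (measurable_gaussianPDF _ _) hratio]
  congr 1 with x
  exact (ENNReal.mul_div_cancel (gaussianPDF_pos m₂ h₂ x).ne' gaussianPDF_ne_top).symm

lemma integrable_sq_gaussianReal (m : ℝ) (v : ℝ≥0) :
    Integrable (fun x => x ^ 2) (gaussianReal m v) :=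
  (memLp_id_gaussianReal 2).integrable_sq

lemma integral_sq_gaussianReal (m : ℝ) (v : ℝ≥0) : ∫ x, x ^ 2 ∂gaussianReal m v = m ^ 2 + v := by
  have hvar := variance_eq_sub (memLp_id_gaussianReal (μ := m) (v := v) 2)
  simp only [variance_id_gaussianReal, Pi.pow_apply, id_eq, integral_id_gaussianReal] at hvar
  linarith

lemma gaussianPDFReal_zero_le_exp_mul (v : ℝ≥0) {m x : ℝ} (hx : m ^ 2 ≤ m * x) :
    gaussianPDFReal 0 v x ≤ Real.exp (-(m ^ 2) / (2 * v)) * gaussianPDFReal m v x := by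
  rw [gaussianPDFReal, gaussianPDFReal, mul_left_comm, ← Real.exp_add, ← add_div]
  gcongr
  linarith

lemma restrict_gaussianReal_le_smul {v : ℝ≥0} (hv : v ≠ 0) (m : ℝ) :
    (gaussianReal 0 v).restrict {x | m ^ 2 ≤ m * x}
      ≤ ENNReal.ofReal (Real.exp (-(m ^ 2) / (2 * v))) • gaussianReal m v := by
  have hmeas : MeasurableSet {x : ℝ | m ^ 2 ≤ m * x} := measurableSet_le (by fun_prop) (by fun_prop)
  rw [gaussianReal_of_var_ne_zero 0 hv, gaussianReal_of_var_ne_zero m hv,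
    ← withDensity_smul _ (measurable_gaussianPDF m v), restrict_withDensity hmeas,
    ← withDensity_indicator hmeas]
  refine withDensity_mono (.of_forall fun x => Set.indicator_le (fun x hx => ?_) x)
  rw [Pi.smul_apply, smul_eq_mul, gaussianPDF, gaussianPDF,
    ← ENNReal.ofReal_mul (Real.exp_nonneg _)]
  exact ENNReal.ofReal_le_ofReal (gaussianPDFReal_zero_le_exp_mul v hx)

lemma setIntegral_sq_gaussianReal_le {v : ℝ≥0} (hv : v ≠ 0) (m : ℝ) :
    ∫ x in {x | m ^ 2 ≤ m * x}, x ^ 2 ∂gaussianReal 0 v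
      ≤ Real.exp (-(m ^ 2) / (2 * v)) * (m ^ 2 + v) := by
  refine (integral_mono_measure (restrict_gaussianReal_le_smul hv m)
    (.of_forall fun x => sq_nonneg x)
    ((integrable_sq_gaussianReal m v).smul_measure ENNReal.ofReal_ne_top)).trans_eq ?_
  rw [integral_smul_measure, ENNReal.toReal_ofReal (Real.exp_nonneg _), integral_sq_gaussianReal,
    smul_eq_mul]

lemma setIntegral_compl_Icc_sq_gaussianReal_le {v : ℝ≥0} (hv : v ≠ 0) {A : ℝ} (hA : 0 ≤ A) :
    ∫ x in (Set.Icc (-A) A)ᶜ, x ^ 2 ∂gaussianReal 0 v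
      ≤ 2 * (A ^ 2 + v) * Real.exp (-(A ^ 2) / (2 * v)) := by
  have hsubset : (Set.Icc (-A) A)ᶜ
      ⊆ {x | A ^ 2 ≤ A * x} ∪ {x | (-A) ^ 2 ≤ -A * x} := by
    intro x hx
    rcases not_and_or.1 hx with hlt | hgt
    · exact .inr (by simp only [Set.mem_ofPred_eq]; nlinarith)
    · exact .inl (by simp only [Set.mem_ofPred_eq]; nlinarith)
  have hint := integrable_sq_gaussianReal 0 v
  calc ∫ x in (Set.Icc (-A) A)ᶜ, x ^ 2 ∂gaussianReal 0 v
      ≤ ∫ x, x ^ 2 ∂((gaussianReal 0 v).restrict {x | A ^ 2 ≤ A * x}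
          + (gaussianReal 0 v).restrict {x | (-A) ^ 2 ≤ -A * x}) :=
        integral_mono_measure
          ((Measure.restrict_mono hsubset le_rfl).trans (Measure.restrict_union_le _ _))
          (.of_forall fun x => sq_nonneg x) (hint.restrict.add_measure hint.restrict)
    _ ≤ Real.exp (-(A ^ 2) / (2 * v)) * (A ^ 2 + v)
          + Real.exp (-((-A) ^ 2) / (2 * v)) * ((-A) ^ 2 + v) := by
        rw [integral_add_measure hint.restrict hint.restrict]
        exact add_le_add (setIntegral_sq_gaussianReal_le hv A)
          (setIntegral_sq_gaussianReal_le hv (-A))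
    _ = 2 * (A ^ 2 + v) * Real.exp (-(A ^ 2) / (2 * v)) := by
        rw [neg_sq]; ring

end Gaussian

section GaussianChannel

variable {μ : Measure ℝ} {v w : ℝ≥0}

lemma integrable_jointLaw_iff {E : Type*} [NormedAddCommGroup E] {f : ℝ × ℝ → E} :
    Integrable f (jointLaw μ)
      ↔ Integrable (fun p => f (p.1, p.1 + p.2)) (μ.prod (gaussianReal 0 1)) :=
  integrable_map_equiv (MeasurableEquiv.shearAddRight ℝ) f

lemma integral_jointLaw {E : Type*} [NormedAddCommGroup E] [NormedSpace ℝ E] (f : ℝ × ℝ → E) :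
    ∫ p, f p ∂jointLaw μ = ∫ p, f (p.1, p.1 + p.2) ∂μ.prod (gaussianReal 0 1) :=
  integral_map_equiv (MeasurableEquiv.shearAddRight ℝ) f

instance isProbabilityMeasure_jointLaw [IsProbabilityMeasure μ] :
    IsProbabilityMeasure (jointLaw μ) :=
  Measure.isProbabilityMeasure_map (by fun_prop)

lemma fst_jointLaw (μ : Measure ℝ) : (jointLaw μ).fst = μ := by
  rw [jointLaw, Measure.fst_map_prodMk (by fun_prop)]
  exact Measure.fst_prod

lemma snd_jointLaw (μ : Measure ℝ) : (jointLaw μ).snd = μ ∗ gaussianReal 0 1 :=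
  Measure.snd_map_prodMk measurable_fst

lemma snd_jointLaw_gaussianReal (m : ℝ) (v : ℝ≥0) :
    (jointLaw (gaussianReal m v)).snd = gaussianReal m (v + 1) := by
  rw [snd_jointLaw, gaussianReal_conv_gaussianReal, add_zero]

lemma snd_jointLaw_le_smul {ν : Measure ℝ} {c : ℝ≥0∞} (h : μ ≤ c • ν) :
    (jointLaw μ).snd ≤ c • (jointLaw ν).snd := by
  rw [snd_jointLaw, snd_jointLaw, ← Measure.conv_smul_left]
  exact Measure.map_mono (Measure.prod_mono h le_rfl) (by fun_prop)

/-- The density of `jointLaw μ` with respect to the product of `μ` and `N(0, w)`; it is the ratio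
of the densities of the output given the input and of `N(0, w)`. -/
noncomputable def jointDensity (w : ℝ≥0) (p : ℝ × ℝ) : ℝ≥0∞ :=
  gaussianPDF p.1 1 p.2 / gaussianPDF 0 w p.2

lemma measurable_jointDensity (w : ℝ≥0) : Measurable (jointDensity w) := by
  have hnum : Measurable fun p : ℝ × ℝ => gaussianPDF p.1 1 p.2 :=
    measurable_uncurry_gaussianPDF.comp (f := fun p : ℝ × ℝ => (p.1, (1 : ℝ≥0), p.2)) (by fun_prop)
  exact hnum.div ((measurable_gaussianPDF 0 w).comp measurable_snd)

lemma jointLaw_apply {s : Set (ℝ × ℝ)} (hs : MeasurableSet s) :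
    jointLaw μ s = ∫⁻ x, gaussianReal x 1 (Prod.mk x ⁻¹' s) ∂μ := by
  rw [jointLaw, Measure.map_apply (by fun_prop) hs, Measure.prod_apply (hs.preimage (by fun_prop))]
  congr with x
  have hshift := gaussianReal_map_const_add (μ := 0) (v := 1) x
  rw [zero_add] at hshift
  rw [← hshift, Measure.map_apply (by fun_prop) (hs.preimage (by fun_prop))]
  rfl

lemma jointLaw_eq_withDensity (hw : w ≠ 0) :
    jointLaw μ = (μ.prod (gaussianReal 0 w)).withDensity (jointDensity w) := by
  ext s hs
  rw [jointLaw_apply hs, withDensity_apply _ hs, ← lintegral_indicator hs,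
    lintegral_prod _ ((measurable_jointDensity w).indicator hs).aemeasurable]
  congr with x
  have hsection : MeasurableSet (Prod.mk x ⁻¹' s) := hs.preimage (by fun_prop)
  rw [gaussianReal_eq_withDensity_gaussianReal x 0 one_ne_zero hw, withDensity_apply _ hsection,
    ← lintegral_indicator hsection]
  rfl

lemma log_toReal_jointDensity (hw : w ≠ 0) (p : ℝ × ℝ) :
    Real.log (jointDensity w p).toReal
      = Real.log w / 2 + p.2 ^ 2 / (2 * w) - (p.2 - p.1) ^ 2 / 2 := by
  rw [jointDensity, ENNReal.toReal_div, toReal_gaussianPDF, toReal_gaussianPDF,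
    Real.log_div (gaussianPDFReal_pos _ _ _ one_ne_zero).ne' (gaussianPDFReal_pos _ _ _ hw).ne',
    log_gaussianPDFReal _ one_ne_zero, log_gaussianPDFReal _ hw]
  simp only [NNReal.coe_one, Real.log_one, sub_zero]
  ring

lemma llr_jointLaw_prod_gaussianReal [SigmaFinite μ] (hw : w ≠ 0) :
    llr (jointLaw μ) (μ.prod (gaussianReal 0 w)) =ᵐ[jointLaw μ]
      fun p => Real.log w / 2 + p.2 ^ 2 / (2 * w) - (p.2 - p.1) ^ 2 / 2 := by
  have hac : jointLaw μ ≪ μ.prod (gaussianReal 0 w) := by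
    rw [jointLaw_eq_withDensity hw]
    exact withDensity_absolutelyContinuous _ _
  have hderiv : (jointLaw μ).rnDeriv (μ.prod (gaussianReal 0 w))
      =ᵐ[μ.prod (gaussianReal 0 w)] jointDensity w := by
    rw [jointLaw_eq_withDensity hw]
    exact Measure.rnDeriv_withDensity _ (measurable_jointDensity w)
  filter_upwards [hac hderiv] with p hp
  rw [llr, hp, log_toReal_jointDensity hw]

lemma integrable_sq_snd_sub_fst_jointLaw [IsFiniteMeasure μ] :
    Integrable (fun p : ℝ × ℝ => (p.2 - p.1) ^ 2) (jointLaw μ) := by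
  simpa only [integrable_jointLaw_iff, add_sub_cancel_left] using
    (integrable_sq_gaussianReal 0 1).comp_snd μ

lemma integral_sq_snd_sub_fst_jointLaw [IsProbabilityMeasure μ] :
    ∫ p : ℝ × ℝ, (p.2 - p.1) ^ 2 ∂jointLaw μ = 1 := by
  simp only [integral_jointLaw, add_sub_cancel_left]
  rw [integral_fun_snd fun z : ℝ => z ^ 2, integral_sq_gaussianReal]
  simp

lemma integrable_sq_snd_jointLaw [IsFiniteMeasure μ] (hμ : MemLp id 2 μ) :
    Integrable (fun p : ℝ × ℝ => p.2 ^ 2) (jointLaw μ) := by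
  rw [integrable_jointLaw_iff]
  exact integrable_add_sq_prod hμ (memLp_id_gaussianReal 2)

lemma integral_sq_snd_jointLaw [IsProbabilityMeasure μ] (hμ : MemLp id 2 μ) :
    ∫ p : ℝ × ℝ, p.2 ^ 2 ∂jointLaw μ = ∫ x, x ^ 2 ∂μ + 1 := by
  rw [integral_jointLaw,
    integral_add_sq_prod hμ (memLp_id_gaussianReal 2) integral_id_gaussianReal,
    integral_sq_gaussianReal]
  simp

lemma integrable_llr_jointLaw_prod_gaussianReal [IsProbabilityMeasure μ] (hw : w ≠ 0)
    (hμ : MemLp id 2 μ) :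
    Integrable (llr (jointLaw μ) (μ.prod (gaussianReal 0 w))) (jointLaw μ) :=
  (((integrable_const _).add ((integrable_sq_snd_jointLaw hμ).div_const _)).sub
    (integrable_sq_snd_sub_fst_jointLaw.div_const _)).congr (llr_jointLaw_prod_gaussianReal hw).symm

lemma integral_llr_jointLaw_prod_gaussianReal [IsProbabilityMeasure μ] (hw : w ≠ 0)
    (hμ : MemLp id 2 μ) :
    ∫ p, llr (jointLaw μ) (μ.prod (gaussianReal 0 w)) p ∂jointLaw μ
      = Real.log w / 2 + (∫ x, x ^ 2 ∂μ + 1) / (2 * w) - 1 / 2 := by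
  have houtput := (integrable_sq_snd_jointLaw hμ).div_const (2 * (w : ℝ))
  have hsum : Integrable (fun p : ℝ × ℝ => Real.log w / 2 + p.2 ^ 2 / (2 * w)) (jointLaw μ) :=
    (integrable_const _).add houtput
  rw [integral_congr_ae (llr_jointLaw_prod_gaussianReal hw),
    integral_sub hsum (integrable_sq_snd_sub_fst_jointLaw.div_const 2),
    integral_add (integrable_const _) houtput, integral_const, probReal_univ, one_smul,
    integral_div, integral_div,
    integral_sq_snd_jointLaw hμ, integral_sq_snd_sub_fst_jointLaw]

lemma le_mutInfo_of_le_smul_gaussianReal [IsProbabilityMeasure μ] {c : ℝ≥0∞} (hc : c ≠ ∞)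
    (h : μ ≤ c • gaussianReal 0 v) :
    ((Real.log (1 + v) / 2 - (v - ∫ x, x ^ 2 ∂μ) / (2 * (1 + v)) - Real.log c.toReal : ℝ) : EReal)
      ≤ mutInfo μ := by
  have hμ : MemLp id 2 μ := (memLp_id_gaussianReal 2).of_measure_le_smul hc h
  have hw : v + 1 ≠ 0 := by positivity
  have hprod : (jointLaw μ).fst.prod (jointLaw μ).snd ≤ c • μ.prod (gaussianReal 0 (v + 1)) := by
    rw [fst_jointLaw, ← Measure.prod_smul_right, ← snd_jointLaw_gaussianReal]
    exact Measure.prod_mono le_rfl (snd_jointLaw_le_smul h)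
  refine le_of_eq_of_le ?_
    (integral_llr_sub_log_le_klDiv (integrable_llr_jointLaw_prod_gaussianReal hw hμ) hc hprod)
  rw [integral_llr_jointLaw_prod_gaussianReal hw hμ, NNReal.coe_add, NNReal.coe_one,
    add_comm (v : ℝ) 1]
  congr 2
  field_simp
  ring

lemma mutInfo_le_CAP [IsProbabilityMeasure μ] {A P : ℝ} (hA : ∀ᵐ x ∂μ, |x| ≤ A)
    (hP : ∫ x, x ^ 2 ∂μ ≤ P) :
    mutInfo μ ≤ CAP A P := by
  refine le_iSup₂_of_le μ ⟨inferInstance, ?_, hP⟩ le_rfl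
  simpa only [ae_iff, not_le] using hA

end GaussianChannel

section TruncatedGaussianInput

variable {v : ℝ≥0} {A : ℝ}

lemma half_le_measureReal_Icc_gaussianReal (hA : 0 < A) (hv : 2 * v ≤ A ^ 2) :
    1 / 2 ≤ (gaussianReal 0 v).real (Set.Icc (-A) A) := by
  have hmarkov := sq_mul_one_sub_measureReal_Icc_le hA.le (integrable_sq_gaussianReal 0 v)
  have htail : ∫ x in (Set.Icc (-A) A)ᶜ, x ^ 2 ∂gaussianReal 0 v ≤ v :=
    (setIntegral_le_integral (integrable_sq_gaussianReal 0 v)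
      (.of_forall fun x => sq_nonneg x)).trans_eq (by simp [integral_sq_gaussianReal])
  nlinarith [sq_pos_of_pos hA]

lemma le_mutInfo_cond_gaussianReal {s : Set ℝ} (hs : gaussianReal 0 v s ≠ 0) :
    ((Real.log (1 + v) / 2 - (v - ∫ x, x ^ 2 ∂(gaussianReal 0 v)[|s]) / (2 * (1 + v))
      - Real.log ((gaussianReal 0 v).real s)⁻¹ : ℝ) : EReal) ≤ mutInfo (gaussianReal 0 v)[|s] := by
  have := cond_isProbabilityMeasure hs
  simpa only [ENNReal.toReal_inv, ← measureReal_def] using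
    le_mutInfo_of_le_smul_gaussianReal (ENNReal.inv_ne_top.2 hs) (cond_le_smul _ s)

lemma mutInfo_cond_Icc_gaussianReal_le_CAP (hA : 0 ≤ A)
    (hs : gaussianReal 0 v (Set.Icc (-A) A) ≠ 0) :
    mutInfo (gaussianReal 0 v)[|Set.Icc (-A) A] ≤ CAP A v := by
  have := cond_isProbabilityMeasure hs
  refine mutInfo_le_CAP ?_ ?_
  · filter_upwards [ae_cond_mem measurableSet_Icc] with x hx using abs_le.2 hx
  · calc ∫ x, x ^ 2 ∂(gaussianReal 0 v)[|Set.Icc (-A) A] ≤ ∫ x, x ^ 2 ∂gaussianReal 0 v :=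
          integral_cond_le_integral measurableSet_Icc hs (integrable_sq_gaussianReal 0 v)
            (fun x hx => sq_le_sq' hx.1 hx.2) fun x hx => sq_le_sq_of_notMem_Icc hA hx
      _ = v := by simp [integral_sq_gaussianReal]

lemma log_sub_CAP_le_tail (hA : 1 ≤ A) (hv : 2 * v ≤ A ^ 2) :
    ((1 / 2 * Real.log (1 + v) : ℝ) : EReal) - CAP A v
      ≤ ((3 * ∫ x in (Set.Icc (-A) A)ᶜ, x ^ 2 ∂gaussianReal 0 v : ℝ) : EReal) := by
  have hA₀ : 0 < A := by linarith
  set tail := ∫ x in (Set.Icc (-A) A)ᶜ, x ^ 2 ∂gaussianReal 0 v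
  set p := (gaussianReal 0 v).real (Set.Icc (-A) A) with hp
  have hhalf : 1 / 2 ≤ p := half_le_measureReal_Icc_gaussianReal hA₀ hv
  have hs : gaussianReal 0 v (Set.Icc (-A) A) ≠ 0 := fun hzero => by
    rw [hp, measureReal_def, hzero] at hhalf
    norm_num at hhalf
  have hp_le_one : p ≤ 1 := measureReal_le_one
  have hlog : Real.log p⁻¹ ≤ 2 * tail := by
    have hmarkov := sq_mul_one_sub_measureReal_Icc_le hA₀.le (integrable_sq_gaussianReal 0 v)
    nlinarith [log_inv_le_two_mul_one_sub hhalf hp_le_one, one_le_pow₀ hA (n := 2)]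
  have hpower : (v - ∫ x, x ^ 2 ∂(gaussianReal 0 v)[|Set.Icc (-A) A]) / (2 * (1 + v)) ≤ tail := by
    have htail₀ : 0 ≤ tail := integral_nonneg fun x => sq_nonneg x
    have hkept : v - tail ≤ ∫ x, x ^ 2 ∂(gaussianReal 0 v)[|Set.Icc (-A) A] := by
      simpa only [integral_sq_gaussianReal, zero_pow two_ne_zero, zero_add] using
        integral_sub_setIntegral_compl_le_integral_cond (measurableSet_Icc (a := -A) (b := A))
          (integrable_sq_gaussianReal 0 v) fun x => sq_nonneg x
    rw [div_le_iff₀ (by positivity)]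
    nlinarith [mul_nonneg htail₀ v.coe_nonneg]
  refine (EReal.sub_le_sub le_rfl ((le_mutInfo_cond_gaussianReal hs).trans
    (mutInfo_cond_Icc_gaussianReal_le_CAP hA₀.le hs))).trans ?_
  rw [← EReal.coe_sub, EReal.coe_le_coe_iff]
  linarith

end TruncatedGaussianInput

/-- For fixed `P > 0` there are `c > 0`, `K > 0` and `A₀ > 0` such that for
all `A ≥ A₀` the gap between the unconstrained AWGN capacity `(1/2)ln(1+P)` and the
amplitude-constrained capacity `C(A,P)` is at most `c · A^K · exp(-A²/(2P))`. -/
theorem smith_capacity_gap_upper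
    (P : ℝ) (hP : 0 < P) :
    ∃ c > (0 : ℝ), ∃ K > (0 : ℝ), ∃ A₀ > (0 : ℝ), ∀ A : ℝ, A₀ ≤ A →
      (((1 / 2) * Real.log (1 + P) : ℝ) : EReal) - CAP A P ≤
        ((c * A ^ K * Real.exp (-(A ^ 2) / (2 * P)) : ℝ) : EReal) := by
  lift P to ℝ≥0 using hP.le
  refine ⟨12, by norm_num, 2, by norm_num, 1 + 2 * P, by positivity, fun A hA => ?_⟩
  have hA₁ : 1 ≤ A := by linarith [P.coe_nonneg]
  have hPA : 2 * P ≤ A ^ 2 := by nlinarith [P.coe_nonneg]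
  refine (log_sub_CAP_le_tail hA₁ hPA).trans ?_
  rw [EReal.coe_le_coe_iff, Real.rpow_two]
  calc 3 * ∫ x in (Set.Icc (-A) A)ᶜ, x ^ 2 ∂gaussianReal 0 P
      ≤ 3 * (2 * (A ^ 2 + P) * Real.exp (-(A ^ 2) / (2 * P))) := by
        gcongr
        exact setIntegral_compl_Icc_sq_gaussianReal_le (by exact_mod_cast hP.ne') (by linarith)
    _ ≤ 3 * (2 * (A ^ 2 + A ^ 2) * Real.exp (-(A ^ 2) / (2 * P))) := by
        gcongr
        linarith [P.coe_nonneg]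
    _ = 12 * A ^ 2 * Real.exp (-(A ^ 2) / (2 * P)) := by ring
end
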